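/- arXiv:0902.4070 — 11 statements merged into one kernel-verified Lean document; each statement's English description precedes it below -/
import Mathlib

section
/- Let 1/3 < p < 1/2 be a real number satisfying 2^{p/(1-p)}·( ((1-p)/p)^{1/(1-p)} − (1-p)/p ) − (1 + (3 − 1/p)/2)^{1/(1-p)} ≥ 0. Then for every nonnegative real sequence (a_n)_{n≥1}, one has ∑_{n=1}^∞ ( (1/n)·∑_{k=n}^∞ a_k )^p ≥ (p/(1-p))^p · ∑_{n=1}^∞ a_n^p. -/
open scoped ENNReal

lemma ls_two_le (x y t : ℝ) (hx : 0 < x) (hy : 0 < y) (hxy : 1 ≤ x * y) (ht : 0 ≤ t) :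
    2 ≤ x ^ t + y ^ t := by
  have h1 : 1 ≤ x ^ t * y ^ t := by
    rw [← Real.mul_rpow hx.le hy.le]
    exact Real.one_le_rpow hxy ht
  have h2 : 0 < x ^ t := Real.rpow_pos_of_pos hx t
  have h3 : 0 < y ^ t := Real.rpow_pos_of_pos hy t
  nlinarith [sq_nonneg (x ^ t - y ^ t)]

lemma ls_deriv (u α r s : ℝ) (hB : 0 < u - s) (hA : 0 < u + α * s) :
    HasDerivAt (fun s => (u - s) * ((u + α * s) / (u - s)) ^ r)
      (r * α * ((u + α * s) / (u - s)) ^ (r - 1) + (r - 1) * ((u + α * s) / (u - s)) ^ r) s := by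
  have hw : 0 < (u + α * s) / (u - s) := div_pos hA hB
  have d1 : HasDerivAt (fun s => u - s) (-1) s := by
    simpa using (hasDerivAt_id s).const_sub u
  have d2 : HasDerivAt (fun s => u + α * s) α s := by
    simpa using ((hasDerivAt_id s).const_mul α).const_add u
  have d3 := (d2.div d1 hB.ne').rpow_const (p := r) (Or.inl hw.ne')
  have d4 := d1.mul d3
  refine d4.congr_deriv ?_
  simp only [Pi.div_apply]
  have e : ((u + α * s) / (u - s)) ^ r
      = ((u + α * s) / (u - s)) ^ (r - 1) * ((u + α * s) / (u - s)) := by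
    rw [Real.rpow_sub_one hw.ne']; field_simp
  rw [e]
  generalize ((u + α * s) / (u - s)) ^ (r - 1) = z
  field_simp
  ring

lemma ls_key (b r k : ℝ) (hb1 : 1 ≤ b) (hb2 : b ≤ 2) (hr : 1 ≤ r) (hrb : r * b = b + 1)
    (hk : 0 < k) :
    b ≤ k * ((k + b / 2) / k) ^ r - (k + 1) * ((k + 1 - b / 2) / (k + 1)) ^ r := by
  set u := k + 1 / 2 with hu
  set α := b - 1 with hα
  have hα0 : 0 ≤ α := by linarith
  have hα1 : α ≤ 1 := by linarith
  let ψ : ℝ → ℝ := fun s => (u - s) * ((u + α * s) / (u - s)) ^ r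
    - (u - (-s)) * ((u + α * (-s)) / (u - (-s))) ^ r - 2 * b * s
  let g : ℝ → ℝ := fun w => r * α * w ^ (r - 1) + (r - 1) * w ^ r
  have hd : ∀ s ∈ Set.Icc (0:ℝ) (1/2), HasDerivAt ψ
      (g ((u + α * s) / (u - s)) + g ((u + α * (-s)) / (u - (-s))) - 2 * b) s := by
    intro s hs
    obtain ⟨h0, h1⟩ := hs
    have hB : 0 < u - s := by linarith
    have hA : 0 < u + α * s := by nlinarith
    have hB' : 0 < u - (-s) := by linarith
    have hA' : 0 < u + α * (-s) := by nlinarith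
    have e1 := ls_deriv u α r s hB hA
    have e2 := (ls_deriv u α r (-s) hB' hA').scomp s (hasDerivAt_neg s)
    have e3 : HasDerivAt (fun s : ℝ => 2 * b * s) (2 * b) s := by
      simpa using (hasDerivAt_id s).const_mul (2 * b)
    refine ((e1.sub e2).sub e3).congr_deriv ?_
    simp only [g, smul_eq_mul]
    ring
  have hm : MonotoneOn ψ (Set.Icc 0 (1/2)) := by
    apply monotoneOn_of_deriv_nonneg (convex_Icc _ _)
    · exact fun s hs => (hd s hs).continuousAt.continuousWithinAt
    · intro s hs
      exact (hd s (interior_subset hs)).differentiableAt.differentiableWithinAt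
    · intro s hs
      have hs' := interior_subset hs
      rw [(hd s hs').deriv]
      obtain ⟨h0, h1⟩ := hs'
      have hB : 0 < u - s := by linarith
      have hA : 0 < u + α * s := by nlinarith
      have hB' : 0 < u - (-s) := by linarith
      have hA' : 0 < u + α * (-s) := by nlinarith
      have hxy : 1 ≤ (u + α * s) / (u - s) * ((u + α * (-s)) / (u - (-s))) := by
        rw [div_mul_div_comm, one_le_div (mul_pos hB hB')]
        have : α ^ 2 ≤ 1 := by nlinarith
        nlinarith [mul_nonneg (sub_nonneg.2 this) (sq_nonneg s)]
      have q1 := ls_two_le _ _ (r - 1) (div_pos hA hB) (div_pos hA' hB') hxy (by linarith)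
      have q2 := ls_two_le _ _ r (div_pos hA hB) (div_pos hA' hB') hxy (by linarith)
      have hra : 0 ≤ r * α := by positivity
      simp only [g]
      nlinarith [mul_le_mul_of_nonneg_left q1 hra,
        mul_le_mul_of_nonneg_left q2 (sub_nonneg.2 hr)]
  have := hm (Set.left_mem_Icc.2 (by norm_num)) (Set.right_mem_Icc.2 (by norm_num)) (by norm_num)
  simp only [ψ] at this
  have a1 : u - 1 / 2 = k := by rw [hu]; ring
  have a2 : u + α * (1 / 2) = k + b / 2 := by rw [hu, hα]; ring
  have a3 : u - -(1 / 2) = k + 1 := by rw [hu]; ring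
  have a4 : u + α * -(1 / 2) = k + 1 - b / 2 := by rw [hu, hα]; ring
  rw [a1, a2, a3, a4] at this
  simp at this
  linarith

lemma ls_holder (p : ℝ) (h0 : 0 < p) (h1 : p < 1) (c l : ℕ → ℝ≥0∞) :
    ∑' k, c k ^ p * l k ≤ (∑' k, c k) ^ p * (∑' k, l k ^ (1 / (1 - p))) ^ (1 - p) := by
  have h2 : 0 < 1 - p := by linarith
  rw [ENNReal.tsum_eq_iSup_sum]
  refine iSup_le fun s => ?_
  have hc : (1 / p).HolderConjugate (1 / (1 - p)) := by
    rw [Real.holderConjugate_iff]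
    constructor
    · rw [lt_div_iff₀ h0]; linarith
    · simp
  refine (ENNReal.inner_le_Lp_mul_Lq s (fun k => c k ^ p) l hc).trans ?_
  simp only [one_div_one_div]
  have : ∀ k, (c k ^ p) ^ (1 / p) = c k := fun k => by
    rw [← ENNReal.rpow_mul, mul_one_div_cancel h0.ne', ENNReal.rpow_one]
  simp only [this]
  gcongr
  · exact ENNReal.sum_le_tsum s
  · exact ENNReal.sum_le_tsum s

lemma ls_rearr (f : ℕ → ℕ → ℝ≥0∞) :
    ∑' n, ∑' k, f n (n + k) = ∑' m, ∑ n ∈ Finset.range (m + 1), f n m := by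
  have h1 : ∀ n, ∑' k, f n (n + k) = ∑' m, if n ≤ m then f n m else 0 := by
    intro n
    rw [← Summable.sum_add_tsum_nat_add' (k := n) (f := fun m => if n ≤ m then f n m else 0) ENNReal.summable]
    rw [Finset.sum_eq_zero (fun i hi => if_neg (not_le.2 (Finset.mem_range.1 hi))), zero_add]
    exact tsum_congr fun k => by simp [add_comm]
  simp only [h1]
  rw [ENNReal.tsum_comm]
  refine tsum_congr fun m => ?_
  rw [tsum_eq_sum (s := Finset.range (m + 1))]
  · exact Finset.sum_congr rfl fun n hn => if_pos (Nat.lt_succ_iff.1 (Finset.mem_range.1 hn))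
  · intro n hn
    exact if_neg fun h => hn (Finset.mem_range.2 (Nat.lt_succ_iff.2 h))

lemma ls_tele (M μ : ℕ → ℝ) (hM : ∀ n, 0 ≤ M n) (hμ : ∀ n, 0 ≤ μ n)
    (h : ∀ n, μ n ≤ M n - M (n + 1)) (n : ℕ) :
    ∑' k, ENNReal.ofReal (μ (n + k)) ≤ ENNReal.ofReal (M n) := by
  apply ENNReal.tsum_le_of_sum_range_le
  intro N
  rw [← ENNReal.ofReal_sum_of_nonneg (fun i _ => hμ _)]
  apply ENNReal.ofReal_le_ofReal
  have : ∑ i ∈ Finset.range N, μ (n + i) ≤ M n - M (n + N) := by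
    induction N with
    | zero => simp
    | succ N ih => rw [Finset.sum_range_succ]; have := h (n + N); rw [← add_assoc]; linarith
  linarith [hM (n + N)]

lemma ls_main (p : ℝ) (h0 : 0 < p) (h1 : p < 1) (C : ℝ) (hC : 0 < C) (s D M : ℕ → ℝ)
    (hD : ∀ n, 0 < D n) (hs : ∀ n, 0 < s n) (hsD : ∀ n, ∑ i ∈ Finset.range (n + 1), D i = s n)
    (hM : ∀ n, 0 < M n) (hMD : ∀ n : ℕ, M n ^ (1 - p) = (((n : ℝ) + 1) ^ p * D n)⁻¹)
    (h : ∀ n, (C / s n) ^ (1 / (1 - p)) ≤ M n - M (n + 1)) (c : ℕ → ℝ≥0∞) :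
    ENNReal.ofReal C * ∑' n, c n ^ p ≤
      ∑' n : ℕ, (((n : ℝ≥0∞) + 1)⁻¹ * ∑' k, c (n + k)) ^ p := by
  have h2 : 0 < 1 - p := by linarith
  have hCs : ∀ n, 0 < C / s n := fun n => div_pos hC (hs n)
  calc ENNReal.ofReal C * ∑' n, c n ^ p
      = ∑' m, ∑ n ∈ Finset.range (m + 1),
          ENNReal.ofReal (D n) * (c m ^ p * ENNReal.ofReal (C / s m)) := by
        rw [← ENNReal.tsum_mul_left]
        refine tsum_congr fun m => ?_
        rw [← Finset.sum_mul, ← ENNReal.ofReal_sum_of_nonneg (fun i _ => (hD i).le), hsD,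
          mul_left_comm, ← ENNReal.ofReal_mul (hs m).le, mul_div_cancel₀ _ (hs m).ne', mul_comm]
    _ = ∑' n, ∑' k, ENNReal.ofReal (D n) * (c (n + k) ^ p * ENNReal.ofReal (C / s (n + k))) :=
        (ls_rearr (fun n m => ENNReal.ofReal (D n) * (c m ^ p * ENNReal.ofReal (C / s m)))).symm
    _ ≤ _ := by
        refine ENNReal.tsum_le_tsum fun n => ?_
        rw [ENNReal.tsum_mul_left]
        have e1 := ls_holder p h0 h1 (fun k => c (n + k)) (fun k => ENNReal.ofReal (C / s (n + k)))
        have e2 := ls_tele M (fun n => (C / s n) ^ (1 / (1 - p))) (fun n => (hM n).le)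
          (fun n => (Real.rpow_pos_of_pos (hCs n) _).le) h n
        simp only [← ENNReal.ofReal_rpow_of_pos (hCs _)] at e2
        have e3 := ENNReal.rpow_le_rpow e2 h2.le
        rw [ENNReal.ofReal_rpow_of_pos (hM n), hMD] at e3
        have hn : (0:ℝ) < (n : ℝ) + 1 := by positivity
        have hnp : (0:ℝ) < ((n : ℝ) + 1) ^ p := Real.rpow_pos_of_pos hn p
        have e4 : ((n : ℝ≥0∞) + 1)⁻¹ ^ p = ENNReal.ofReal ((((n : ℝ) + 1) ^ p)⁻¹) := by
          rw [ENNReal.inv_rpow, ENNReal.ofReal_inv_of_pos hnp, ← ENNReal.ofReal_rpow_of_pos hn]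
          congr 2
          rw [ENNReal.ofReal_add (by positivity) (by positivity)]; simp
        rw [ENNReal.mul_rpow_of_nonneg _ _ h0.le, e4]
        calc _ ≤ ENNReal.ofReal (D n) * ((∑' k, c (n + k)) ^ p
              * ENNReal.ofReal ((((n : ℝ) + 1) ^ p * D n)⁻¹)) := by
              gcongr
              exact e1.trans (by gcongr)
          _ = _ := by
              rw [mul_left_comm, ← ENNReal.ofReal_mul (hD n).le, mul_comm]
              congr 2
              have := (hD n).ne'
              field_simp

noncomputable def lsS (b : ℝ) : ℕ → ℝ
  | 0 => 1
  | m + 1 => lsS b m * (((m : ℝ) + 2 + b / 2) / ((m : ℝ) + 2 - b / 2))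

noncomputable def lsD (b : ℝ) : ℕ → ℝ
  | 0 => 1
  | m + 1 => lsS b m * (b / ((m : ℝ) + 2 - b / 2))

theorem stmt_0 (p : ℝ) (hp1 : 1 / 3 < p) (hp2 : p < 1 / 2)
    (hcond : 0 ≤ (2 : ℝ) ^ (p / (1 - p)) *
        (((1 - p) / p) ^ ((1 : ℝ) / (1 - p)) - (1 - p) / p) -
        (1 + (3 - 1 / p) / 2) ^ ((1 : ℝ) / (1 - p)))
    (a : ℕ → ℝ) (ha : ∀ n, 1 ≤ n → 0 ≤ a n) :
    ENNReal.ofReal ((p / (1 - p)) ^ p) * ∑' n : ℕ, ENNReal.ofReal (a (n + 1)) ^ p ≤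
      ∑' n : ℕ, (((n : ℝ≥0∞) + 1)⁻¹ * ∑' k : ℕ, ENNReal.ofReal (a (n + 1 + k))) ^ p := by
  have h0 : 0 < p := by linarith
  have h1 : p < 1 := by linarith
  have h2 : 0 < 1 - p := by linarith
  set b := (1 - p) / p with hb
  have hbp : b * p = 1 - p := by rw [hb]; field_simp
  have hb0 : 0 < b := div_pos h2 h0
  have hb1 : 1 ≤ b := by rw [hb, le_div_iff₀ h0]; linarith
  have hb2 : b ≤ 2 := by rw [hb, div_le_iff₀ h0]; linarith
  set r := 1 / (1 - p) with hr
  have hr1 : 1 ≤ r := by rw [hr, le_div_iff₀ h2]; linarith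
  have hrb : r * b = b + 1 := by rw [hr, hb]; field_simp; ring
  have hrp : r * (1 - p) = 1 := by rw [hr]; field_simp
  have hpr : p * r = r - 1 := by linarith
  have hc4 : 1 + (3 - 1 / p) / 2 = 2 - b / 2 := by rw [hb]; field_simp; ring
  have hppr : p / (1 - p) = r - 1 := by rw [hr]; field_simp; ring
  have hpb : (p / (1 - p)) = b⁻¹ := by rw [hb]; field_simp
  rw [hc4, hppr] at hcond
  have hden : ∀ m : ℕ, 0 < (m : ℝ) + 2 - b / 2 := fun m => by
    have : (0:ℝ) ≤ m := by positivity
    linarith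
  have hs : ∀ n, 0 < lsS b n := by
    intro n
    induction n with
    | zero => simp [lsS]
    | succ m ih => exact mul_pos ih (div_pos (by positivity) (hden m))
  have hD : ∀ n, 0 < lsD b n := by
    intro n
    cases n with
    | zero => simp [lsD]
    | succ m => exact mul_pos (hs m) (div_pos hb0 (hden m))
  have hsD : ∀ n, ∑ i ∈ Finset.range (n + 1), lsD b i = lsS b n := by
    intro n
    induction n with
    | zero => simp [lsD, lsS]
    | succ m ih =>
      rw [Finset.sum_range_succ, ih, lsD, lsS]
      have h3 := (hden m).ne'
      have h4 : (m : ℝ) + 2 + b / 2 = ((m : ℝ) + 2 - b / 2) + b := by ring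
      rw [h4, add_div, div_self h3]
      ring
  have hpos : ∀ n : ℕ, 0 < ((n : ℝ) + 1) ^ p * lsD b n := fun n =>
    mul_pos (Real.rpow_pos_of_pos (by positivity) p) (hD n)
  -- the general form of `M`
  have hgen : ∀ k S x : ℝ, 0 < k → 0 < S → 0 < x →
      ((k ^ p * (S * (b / x)))⁻¹) ^ r = ((S * b) ^ r)⁻¹ * (k * (x / k) ^ r) := by
    intro k S x hk hS hx
    have e : (k ^ p * (S * (b / x)))⁻¹ = (S * b)⁻¹ * (x * (k ^ p)⁻¹) := by
      have := (Real.rpow_pos_of_pos hk p).ne'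
      field_simp
    have hkp := Real.rpow_pos_of_pos hk p
    rw [e, Real.mul_rpow (by positivity) (by positivity), Real.mul_rpow hx.le (by positivity),
      Real.inv_rpow (by positivity), Real.inv_rpow hkp.le, ← Real.rpow_mul hk.le, hpr,
      Real.rpow_sub_one hk.ne', Real.div_rpow hx.le hk.le]
    have := (Real.rpow_pos_of_pos hk r).ne'
    field_simp
  have hμ : ∀ S : ℝ, 0 < S → ((p / (1 - p)) ^ p / S) ^ r = ((S * b) ^ r)⁻¹ * b := by
    intro S hS
    rw [hpb, Real.div_rpow (by positivity) hS.le, ← Real.rpow_mul (by positivity), hpr,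
      Real.mul_rpow hS.le hb0.le, Real.rpow_sub_one (by positivity), Real.inv_rpow hb0.le]
    have := (Real.rpow_pos_of_pos hb0 r).ne'
    have := (Real.rpow_pos_of_pos hS r).ne'
    field_simp
  have hfin := ls_main p h0 h1 ((p / (1 - p)) ^ p)
    (Real.rpow_pos_of_pos (div_pos h0 h2) p) (lsS b) (lsD b)
    (fun n => ((((n : ℝ) + 1) ^ p * lsD b n)⁻¹) ^ r) hD hs hsD
    (fun n => Real.rpow_pos_of_pos (inv_pos.2 (hpos n)) r)
    (fun n => by rw [← Real.rpow_mul (inv_pos.2 (hpos n)).le, hrp, Real.rpow_one])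
    (fun n => by
      rw [← hr, hμ _ (hs n)]
      have eM1 := hgen ((n : ℝ) + 2) (lsS b n) ((n : ℝ) + 2 - b / 2) (by positivity) (hs n) (hden n)
      have eD1 : lsD b (n + 1) = lsS b n * (b / ((n : ℝ) + 2 - b / 2)) := rfl
      have ec : (((n + 1 : ℕ) : ℝ) + 1) = (n : ℝ) + 2 := by push_cast; ring
      rw [ec, eD1, eM1]
      cases n with
      | zero =>
        have q0 : lsS b 0 = 1 := rfl
        have q1 : lsD b 0 = 1 := rfl
        rw [q0, q1]
        have hbr := Real.rpow_pos_of_pos hb0 r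
        have e5 : (0:ℝ) < 2 - b / 2 := by linarith
        have h2r := Real.rpow_pos_of_pos (show (0:ℝ) < 2 by norm_num) r
        simp only [Nat.cast_zero, zero_add, Real.one_rpow, one_mul, inv_one]
        rw [Real.div_rpow e5.le (by norm_num)]
        rw [Real.rpow_sub_one (by norm_num)] at hcond
        have e6 : 2 * ((2 - b / 2) ^ r / 2 ^ r) ≤ b ^ r - b := by
          rw [← mul_div_assoc, div_le_iff₀ h2r]
          linarith
        have e7 : (1:ℝ) = (b ^ r)⁻¹ * b ^ r := by field_simp
        have e8 := mul_le_mul_of_nonneg_left e6 (inv_pos.2 hbr).le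
        rw [mul_sub, ← e7] at e8
        linarith
      | succ m =>
        have eD2 : lsD b (m + 1) = lsS b (m + 1) * (b / ((m : ℝ) + 2 + b / 2)) := by
          rw [lsD, lsS]
          have := (hden m).ne'
          field_simp
        have ec2 : (((m + 1 : ℕ) : ℝ) + 1) = (m : ℝ) + 2 := by push_cast; ring
        have ec3 : (((m + 1 : ℕ) : ℝ) + 2) = (m : ℝ) + 2 + 1 := by push_cast; ring
        rw [ec2, ec3, eD2, hgen _ _ _ (by positivity) (hs (m + 1)) (by positivity), ← mul_sub]
        exact mul_le_mul_of_nonneg_left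
          (ls_key b r ((m : ℝ) + 2) hb1 hb2 hr1 hrb (by positivity))
          (inv_pos.2 (Real.rpow_pos_of_pos (mul_pos (hs (m + 1)) hb0) r)).le)
    (fun n => ENNReal.ofReal (a (n + 1)))
  simpa only [add_right_comm] using hfin
end

section
/- For every real p with 0 < p ≤ 0.346 and every nonnegative real sequence (a_n)_{n≥1}, one has ∑_{n=1}^∞ ( (1/n)·∑_{k=n}^∞ a_k )^p ≥ (p/(1-p))^p · ∑_{n=1}^∞ a_n^p. -/
open scoped ENNReal

lemma aux_conv (p l x : ℝ) (hp : 0 ≤ p) (hl : 0 ≤ l) (hl1 : l ≤ 1) (hx : 0 < x) :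
    ((1 - l) + l * x) ^ (-p) ≤ (1 - l) + l * x ^ (-p) := by
  have h1 := Real.geom_mean_le_arith_mean2_weighted (w₁ := 1 - l) (w₂ := l) (p₁ := 1) (p₂ := x)
    (by linarith) hl (by norm_num) hx.le (by ring)
  have h2 := Real.geom_mean_le_arith_mean2_weighted (w₁ := 1 - l) (w₂ := l) (p₁ := 1)
    (p₂ := x ^ (-p)) (by linarith) hl (by norm_num) (by positivity) (by ring)
  simp only [Real.one_rpow, one_mul, mul_one] at h1 h2
  have h3 : ((1 - l) + l * x) ^ (-p) ≤ (x ^ l) ^ (-p) :=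
    Real.rpow_le_rpow_of_nonpos (by positivity) h1 (by linarith)
  have h4 : (x ^ l) ^ (-p) = (x ^ (-p)) ^ l := by
    rw [← Real.rpow_mul hx.le, ← Real.rpow_mul hx.le, mul_comm]
  linarith

lemma aux_half (p x : ℝ) (hp : 0 ≤ p) (hp1 : p ≤ 1 / 2) (hx : 0 < x) :
    x ^ (-p) ≤ (1 - 2 * p) + 2 * p * x ^ (-(1 / 2) : ℝ) := by
  have h2 := Real.geom_mean_le_arith_mean2_weighted (w₁ := 1 - 2 * p) (w₂ := 2 * p) (p₁ := 1)
    (p₂ := x ^ (-(1 / 2) : ℝ)) (by linarith) (by linarith) (by norm_num) (by positivity) (by ring)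
  simp only [Real.one_rpow, one_mul, mul_one] at h2
  rw [← Real.rpow_mul hx.le] at h2
  have : -(1 / 2) * (2 * p) = -p := by ring
  rwa [this] at h2

/-- integral form -/
lemma aux_int (p v q : ℝ) (hp1 : p < 1) :
    ∫ t in v..(v + q), t ^ (-p) = ((v + q) ^ (1 - p) - v ^ (1 - p)) / (1 - p) := by
  rw [integral_rpow (Or.inl (by linarith))]
  rw [show -p + 1 = 1 - p by ring]

lemma aux_step (p s m v : ℝ) (hp : 0 < p) (hp1 : p < 1) (hs : s = p / (1 - p)) (hm : 0 < m)
    (hv : 0 ≤ v) (h : (v + (1 + s)) ^ (1 - p) - v ^ (1 - p) ≤ m ^ (-p)) :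
    (v + s + (1 + s)) ^ (1 - p) - (v + s) ^ (1 - p) ≤ (m + s) ^ (-p) := by
  have h1p : 0 < 1 - p := by linarith
  have hs0 : 0 < s := by rw [hs]; positivity
  have hq : (1 + s) * (1 - p) = 1 := by rw [hs]; field_simp; ring
  set q := 1 + s with hqd
  have hq0 : 0 < q := by linarith
  have e1 := aux_int p v q hp1
  have e2 := aux_int p (v + s) q hp1
  rw [show v + s + q = (v + q) + s by ring, ← intervalIntegral.integral_comp_add_right] at e2
  have hint : IntervalIntegrable (fun t : ℝ => t ^ (-p)) MeasureTheory.volume v (v + q) :=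
    intervalIntegral.intervalIntegrable_rpow' (by linarith)
  have hint' : IntervalIntegrable (fun t : ℝ => (t + s) ^ (-p)) MeasureTheory.volume v (v + q) := by
    apply ContinuousOn.intervalIntegrable
    intro t ht
    rw [Set.uIcc_of_le (by linarith)] at ht
    have : t + s ≠ 0 := by have := ht.1; linarith
    exact ((by fun_prop : ContinuousAt (fun t => t + s) t).rpow_const (Or.inl this)).continuousWithinAt
  set l := m / (m + s) with hl
  have hl0 : 0 ≤ l := by positivity
  have hl1 : l ≤ 1 := by rw [hl, div_le_one (by positivity)]; linarith
  have hM : 0 < (m + s) ^ (-p) := by positivity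
  have key := intervalIntegral.integral_mono_on_of_le_Ioo (a := v) (b := v + q)
    (f := fun t : ℝ => (t + s) ^ (-p))
    (g := fun t : ℝ => (m + s) ^ (-p) * (1 - l) + (m + s) ^ (-p) * l * m ^ p * t ^ (-p))
    (μ := MeasureTheory.volume) (by linarith) hint'
    ((intervalIntegrable_const).add (hint.const_mul _)) (by
      intro t ht
      have ht0 : 0 < t := lt_of_le_of_lt hv ht.1
      have hc := aux_conv p l (t / m) hp.le hl0 hl1 (by positivity)
      have ee : t + s = (m + s) * ((1 - l) + l * (t / m)) := by
        rw [hl]; field_simp; ring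
      have hpos : 0 ≤ (1 - l) + l * (t / m) := by
        have : 0 ≤ l * (t / m) := by positivity
        linarith
      show (t + s) ^ (-p) ≤ _
      rw [ee, Real.mul_rpow (by positivity) hpos]
      rw [Real.div_rpow ht0.le hm.le, Real.rpow_neg hm.le, div_inv_eq_mul] at hc
      calc _ ≤ _ := mul_le_mul_of_nonneg_left hc hM.le
        _ = _ := by ring)
  rw [e2, intervalIntegral.integral_add intervalIntegrable_const (hint.const_mul _),
    intervalIntegral.integral_const, intervalIntegral.integral_const_mul, e1] at key
  simp only [add_sub_cancel_left, smul_eq_mul] at key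
  have hmp : m ^ p * m ^ (-p) = 1 := by rw [← Real.rpow_add hm]; simp
  have hmp0 : 0 < m ^ p := by positivity
  rw [div_le_iff₀ h1p] at key
  rw [show v + s + q = (v + q) + s by ring]
  refine key.trans ?_
  have : ((m + s) ^ (-p) * l * m ^ p) * ((v + q) ^ (1 - p) - v ^ (1 - p)) ≤ ((m + s) ^ (-p) * l * m ^ p) * m ^ (-p) :=
    mul_le_mul_of_nonneg_left h (by positivity)
  calc _ = (m + s) ^ (-p) * (1 - l) * (q * (1 - p)) + ((m + s) ^ (-p) * l * m ^ p) * ((v + q) ^ (1 - p) - v ^ (1 - p)) := by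
        field_simp
    _ ≤ (m + s) ^ (-p) * (1 - l) * (q * (1 - p)) + ((m + s) ^ (-p) * l * m ^ p) * m ^ (-p) := by linarith
    _ = (m + s) ^ (-p) * (1 - l) * (q * (1 - p)) + ((m + s) ^ (-p) * l) * (m ^ p * m ^ (-p)) := by ring
    _ = _ := by rw [hmp, hq]; ring

/-- threshold via the `-1/2` mean -/
lemma aux_thr (p s m v : ℝ) (hp : 0 < p) (hp1 : p ≤ 1 / 2) (hs : s = p / (1 - p)) (hm : 0 < m)
    (hmq : (1 + s) / 4 ≤ m) (hv : v = m - (1 + s) / 2 + (1 + s) ^ 2 / (16 * m)) :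
    (v + (1 + s)) ^ (1 - p) - v ^ (1 - p) ≤ m ^ (-p) := by
  have h1p : 0 < 1 - p := by linarith
  have hs0 : 0 < s := by rw [hs]; positivity
  have hq : (1 + s) * (1 - p) = 1 := by rw [hs]; field_simp; ring
  set q := 1 + s with hqd
  have hq0 : 0 < q := by linarith
  obtain ⟨w, hw0, hw⟩ : ∃ w : ℝ, 0 < w ∧ m = w ^ 2 :=
    ⟨Real.sqrt m, Real.sqrt_pos.2 hm, (Real.sq_sqrt hm.le).symm⟩
  have hv1 : v = (w - q / (4 * w)) ^ 2 := by rw [hv, hw]; field_simp; ring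
  have hv2 : v + q = (w + q / (4 * w)) ^ 2 := by rw [hv, hw]; field_simp; ring
  have hwq : 0 ≤ w - q / (4 * w) := by
    rw [sub_nonneg, div_le_iff₀ (by positivity)]; nlinarith
  have hv0 : 0 ≤ v := by rw [hv1]; positivity
  have e1 := aux_int p v q (by linarith)
  have e2 := aux_int (1 / 2) v q (by norm_num)
  have hr1 : v ^ (1 - 1 / 2 : ℝ) = w - q / (4 * w) := by
    rw [hv1, ← Real.rpow_natCast, ← Real.rpow_mul hwq]; norm_num
  have hr2 : (v + q) ^ (1 - 1 / 2 : ℝ) = w + q / (4 * w) := by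
    rw [hv2, ← Real.rpow_natCast, ← Real.rpow_mul (by positivity)]; norm_num
  rw [hr1, hr2] at e2
  have hint : ∀ a : ℝ, a < 1 → IntervalIntegrable (fun t : ℝ => t ^ (-a)) MeasureTheory.volume v (v + q) :=
    fun a ha => intervalIntegral.intervalIntegrable_rpow' (by linarith)
  have hM : 0 < m ^ (-p) := by positivity
  have hmw : m ^ (-(1/2) : ℝ) = w⁻¹ := by
    rw [hw, ← Real.rpow_natCast, ← Real.rpow_mul hw0.le]; norm_num [Real.rpow_neg_one]
  have key := intervalIntegral.integral_mono_on_of_le_Ioo (a := v) (b := v + q)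
    (f := fun t : ℝ => t ^ (-p))
    (g := fun t : ℝ => m ^ (-p) * (1 - 2 * p) + m ^ (-p) * (2 * p) * w * t ^ (-(1/2) : ℝ))
    (μ := MeasureTheory.volume) (by linarith) (hint p (by linarith))
    ((intervalIntegrable_const).add ((hint (1/2) (by norm_num)).const_mul _)) (by
      intro t ht
      have ht0 : 0 < t := lt_of_le_of_lt hv0 ht.1
      have hc := aux_half p (t / m) hp.le hp1 (by positivity)
      rw [Real.div_rpow ht0.le hm.le, Real.div_rpow ht0.le hm.le, hmw, div_inv_eq_mul,
        div_le_iff₀ hM] at hc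
      calc _ ≤ _ := hc
        _ = _ := by ring)
  rw [e1, intervalIntegral.integral_add intervalIntegrable_const ((hint (1/2) (by norm_num)).const_mul _),
    intervalIntegral.integral_const, intervalIntegral.integral_const_mul, e2] at key
  simp only [add_sub_cancel_left, smul_eq_mul] at key
  rw [div_le_iff₀ h1p] at key
  refine key.trans (le_of_eq ?_)
  calc _ = m ^ (-p) * (q * (1 - p)) := by field_simp; ring
    _ = _ := by rw [hq, mul_one]

def auxGood (p s : ℝ) (m v : ℝ) : Prop :=
  ∃ Y : ℕ → ℝ, (∀ k, 0 ≤ Y k) ∧ Y 0 = v ∧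
    ∀ k : ℕ, (Y (k + 1) + 1) ^ (1 - p) ≤ Y k ^ (1 - p) + (m + k * s) ^ (-p)

lemma aux_good_of (p s m v : ℝ) (hp : 0 < p) (hp1 : p < 1) (hs : s = p / (1 - p)) (hm : 0 < m)
    (hv : 0 ≤ v) (h : (v + (1 + s)) ^ (1 - p) - v ^ (1 - p) ≤ m ^ (-p)) : auxGood p s m v := by
  have h1p : 0 < 1 - p := by linarith
  have hs0 : 0 < s := by rw [hs]; positivity
  have H : ∀ k : ℕ, (v + k * s + (1 + s)) ^ (1 - p) - (v + k * s) ^ (1 - p) ≤ (m + k * s) ^ (-p) := by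
    intro k
    induction k with
    | zero => simpa using h
    | succ k ih =>
      have := aux_step p s (m + k * s) (v + k * s) hp hp1 hs (by positivity) (by positivity) ih
      push_cast
      rw [show v + (k + 1) * s = v + k * s + s by ring, show m + (k + 1) * s = m + k * s + s by ring]
      exact this
  refine ⟨fun k => v + k * s, fun k => by positivity, by simp, fun k => ?_⟩
  have := H k
  push_cast
  rw [show v + (k + 1) * s + 1 = v + k * s + (1 + s) by ring]
  linarith

lemma aux_good_prev (p s m v w : ℝ) (hv : 0 ≤ v) (h : auxGood p s (m + s) w)
    (hw : (w + 1) ^ (1 - p) ≤ v ^ (1 - p) + m ^ (-p)) : auxGood p s m v := by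
  obtain ⟨Y, h1, h2, h3⟩ := h
  refine ⟨fun k => Nat.casesOn k v Y, ?_, rfl, ?_⟩
  · rintro (_ | k)
    · exact hv
    · exact h1 k
  · rintro (_ | k)
    · simpa [h2] using hw
    · have := h3 k
      simp only
      push_cast
      rw [show m + (k + 1) * s = m + s + k * s by ring]
      exact this

lemma aux_holder (p a b y : ℝ) (hp : 0 < p) (hp1 : p < 1) (ha : 0 ≤ a) (hb : 0 ≤ b) (hy : 0 ≤ y) :
    a ^ p + b ^ p * y ^ (1 - p) ≤ (a + b) ^ p * (1 + y) ^ (1 - p) := by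
  rcases (add_nonneg ha hb).eq_or_lt with h | h
  · have ha' : a = 0 := by linarith
    have hb' : b = 0 := by linarith
    subst ha' hb'
    simp [Real.zero_rpow hp.ne']
  have hy1 : 0 < 1 + y := by linarith
  have h1 := Real.geom_mean_le_arith_mean2_weighted (w₁ := p) (w₂ := 1 - p) (p₁ := a / (a + b))
    (p₂ := 1 / (1 + y)) hp.le (by linarith) (by positivity) (by positivity) (by ring)
  have h2 := Real.geom_mean_le_arith_mean2_weighted (w₁ := p) (w₂ := 1 - p) (p₁ := b / (a + b))
    (p₂ := y / (1 + y)) hp.le (by linarith) (by positivity) (by positivity) (by ring)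
  have e : (p * (a / (a + b)) + (1 - p) * (1 / (1 + y))) + (p * (b / (a + b)) + (1 - p) * (y / (1 + y))) = 1 := by
    field_simp; ring
  rw [Real.div_rpow ha h.le, Real.div_rpow (by norm_num) hy1.le, Real.one_rpow] at h1
  rw [Real.div_rpow hb h.le, Real.div_rpow hy hy1.le] at h2
  have hP : 0 < (a + b) ^ p := by positivity
  have hQ : 0 < (1 + y) ^ (1 - p) := by positivity
  have h3 : a ^ p / (a + b) ^ p * (1 / (1 + y) ^ (1 - p)) + b ^ p / (a + b) ^ p * (y ^ (1 - p) / (1 + y) ^ (1 - p)) ≤ 1 := by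
    linarith
  have h4 : a ^ p / (a + b) ^ p * (1 / (1 + y) ^ (1 - p)) + b ^ p / (a + b) ^ p * (y ^ (1 - p) / (1 + y) ^ (1 - p))
    = (a ^ p + b ^ p * y ^ (1 - p)) / ((a + b) ^ p * (1 + y) ^ (1 - p)) := by
    field_simp
  rwa [h4, div_le_one (by positivity)] at h3

lemma aux_sum (p s : ℝ) (hp : 0 < p) (hp1 : p < 1) (hs : 0 < s) (hg : auxGood p s s 0)
    (A b : ℕ → ℝ) (hA : ∀ n, 0 ≤ A n) (hb : ∀ n, 0 ≤ b n) (hAb : ∀ n, A n = b n + A (n + 1)) (M : ℕ) :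
    ∑ n ∈ Finset.range M, s ^ p * b n ^ p ≤ ∑ n ∈ Finset.range M, (((n : ℝ) + 1)⁻¹ * A n) ^ p := by
  obtain ⟨Y, h1, h2, h3⟩ := hg
  have H : ∀ M : ℕ, ∑ n ∈ Finset.range M, s ^ p * b n ^ p + s ^ p * Y M ^ (1 - p) * A M ^ p ≤
      ∑ n ∈ Finset.range M, (((n : ℝ) + 1)⁻¹ * A n) ^ p := by
    intro M
    induction M with
    | zero => simp [h2, Real.zero_rpow (show 1 - p ≠ 0 by linarith)]
    | succ M ih =>
      rw [Finset.sum_range_succ, Finset.sum_range_succ]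
      have hh := aux_holder p (b M) (A (M + 1)) (Y (M + 1)) hp hp1 (hb M) (hA _) (h1 _)
      rw [← hAb] at hh
      have h3' := h3 M
      have hsp : 0 < s ^ p := by positivity
      have hAp : 0 ≤ A M ^ p := Real.rpow_nonneg (hA M) p
      have e : (((M : ℝ) + 1)⁻¹ * A M) ^ p = s ^ p * (s + M * s) ^ (-p) * A M ^ p := by
        rw [Real.mul_rpow (by positivity) (hA M), show s + M * s = s * (M + 1) by ring,
          Real.mul_rpow hs.le (by positivity), Real.rpow_neg hs.le, Real.inv_rpow (by positivity),
          Real.rpow_neg (by positivity)]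
        field_simp
      have h5 : A M ^ p * (1 + Y (M + 1)) ^ (1 - p) ≤ A M ^ p * (Y M ^ (1 - p) + (s + M * s) ^ (-p)) := by
        rw [add_comm 1]; exact mul_le_mul_of_nonneg_left h3' hAp
      have h6 := mul_le_mul_of_nonneg_left (hh.trans h5) hsp.le
      rw [e]
      nlinarith [h6]
  have := H M
  have h0 : 0 ≤ s ^ p * Y M ^ (1 - p) * A M ^ p := by
    have := Real.rpow_nonneg (hA M) p
    have := Real.rpow_nonneg (h1 M) (1 - p)
    positivity
  linarith

lemma aux_main (p s : ℝ) (hp : 0 < p) (hp1 : p < 1) (hs : 0 < s) (hg : auxGood p s s 0)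
    (a : ℕ → ℝ) (ha : ∀ n, 1 ≤ n → 0 ≤ a n) :
    ENNReal.ofReal (s ^ p) * ∑' n : ℕ, ENNReal.ofReal (a (n + 1)) ^ p ≤
      ∑' n : ℕ, (((n : ℝ≥0∞) + 1)⁻¹ * ∑' k : ℕ, ENNReal.ofReal (a (n + 1 + k))) ^ p := by
  by_cases htop : ∑' k : ℕ, ENNReal.ofReal (a (0 + 1 + k)) = ⊤
  · have : (((0 : ℕ) : ℝ≥0∞) + 1)⁻¹ * ∑' k : ℕ, ENNReal.ofReal (a (0 + 1 + k)) = ⊤ := by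
      rw [htop]; simp
    have h2 := ENNReal.le_tsum (f := fun n : ℕ => (((n : ℝ≥0∞) + 1)⁻¹ * ∑' k : ℕ, ENNReal.ofReal (a (n + 1 + k))) ^ p) 0
    simp only [this, ENNReal.top_rpow_of_pos hp] at h2
    exact le_top.trans h2
  have hrec : ∀ n : ℕ, ∑' k : ℕ, ENNReal.ofReal (a (n + 1 + k)) =
      ENNReal.ofReal (a (n + 1)) + ∑' k : ℕ, ENNReal.ofReal (a (n + 1 + 1 + k)) := by
    intro n
    rw [tsum_eq_zero_add' ENNReal.summable]
    simp only [add_zero]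
    congr 2
    ext k
    congr 2
    ring
  have hfin : ∀ n : ℕ, ∑' k : ℕ, ENNReal.ofReal (a (n + 1 + k)) ≠ ⊤ := by
    intro n
    induction n with
    | zero => exact htop
    | succ n ih =>
      rw [hrec n] at ih
      exact (ENNReal.add_ne_top.1 ih).2
  have hbn : ∀ n : ℕ, 0 ≤ a (n + 1) := fun n => ha _ (by omega)
  have hS := aux_sum p s hp hp1 hs hg (fun n => (∑' k : ℕ, ENNReal.ofReal (a (n + 1 + k))).toReal)
    (fun n => a (n + 1)) (fun n => ENNReal.toReal_nonneg) hbn (by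
      intro n
      show (∑' k : ℕ, ENNReal.ofReal (a (n + 1 + k))).toReal = a (n + 1) + (∑' k : ℕ, ENNReal.ofReal (a (n + 1 + 1 + k))).toReal
      rw [hrec n, ENNReal.toReal_add ENNReal.ofReal_ne_top (hfin (n + 1)), ENNReal.toReal_ofReal (hbn n)])
  rw [← ENNReal.tsum_mul_left, ENNReal.tsum_eq_iSup_nat]
  refine iSup_le fun M => ?_
  refine le_trans ?_ (ENNReal.sum_le_tsum (Finset.range M))
  have hM := ENNReal.ofReal_le_ofReal (hS M)
  rw [ENNReal.ofReal_sum_of_nonneg (fun n _ => mul_nonneg (by positivity) (Real.rpow_nonneg (hbn n) p)),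
    ENNReal.ofReal_sum_of_nonneg (fun n _ => Real.rpow_nonneg (mul_nonneg (by positivity) ENNReal.toReal_nonneg) p)] at hM
  refine le_trans (le_of_eq ?_) (hM.trans (le_of_eq ?_))
  · refine Finset.sum_congr rfl fun n _ => ?_
    rw [ENNReal.ofReal_mul (by positivity), ENNReal.ofReal_rpow_of_nonneg (hbn n) hp.le]
  · refine Finset.sum_congr rfl fun n _ => ?_
    rw [← ENNReal.ofReal_rpow_of_nonneg (mul_nonneg (by positivity) ENNReal.toReal_nonneg) hp.le,
      ENNReal.ofReal_mul (by positivity), ENNReal.ofReal_toReal (hfin n),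
      ENNReal.ofReal_inv_of_pos (by positivity)]
    congr 3
    rw [ENNReal.ofReal_add (by positivity) (by norm_num)]
    simp

lemma aux_first (p s w : ℝ) (hp1 : p < 1) (hs : s = p / (1 - p)) (hs0 : 0 < s)
    (hw : 0 ≤ w) (h : w + 1 ≤ s ^ (-s)) : (w + 1) ^ (1 - p) ≤ 0 ^ (1 - p) + s ^ (-p) := by
  have h1p : 0 < 1 - p := by linarith
  have h2 : (w + 1) ^ (1 - p) ≤ (s ^ (-s)) ^ (1 - p) := Real.rpow_le_rpow (by linarith) h h1p.le
  rw [← Real.rpow_mul hs0.le] at h2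
  have : -s * (1 - p) = -p := by rw [hs]; field_simp
  rw [this] at h2
  rw [Real.zero_rpow h1p.ne']
  linarith

lemma aux_mono (s t : ℝ) (hs : 0 < s) (hst : s ≤ t) (h : -Real.log t ≤ s / t) :
    t ^ (-t) ≤ s ^ (-s) := by
  have ht : 0 < t := by linarith
  rw [Real.rpow_def_of_pos hs, Real.rpow_def_of_pos ht, Real.exp_le_exp]
  have h1 := Real.log_le_sub_one_of_pos (show 0 < s / t by positivity)
  rw [Real.log_div hs.ne' ht.ne'] at h1
  have h2 : s * (Real.log s - Real.log t) ≤ s * (s / t - 1) := mul_le_mul_of_nonneg_left h1 hs.le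
  have h3 : 0 ≤ (t - s) * (Real.log t + s / t) := mul_nonneg (by linarith) (by linarith)
  have h4 : t * (s / t) = s := by field_simp
  nlinarith

lemma aux_le_pow (x y : ℝ) (m n : ℕ) (hn : n ≠ 0) (hx : 0 ≤ x) (hy : 0 ≤ y) (h : y ^ n ≤ x ^ m) :
    y ≤ x ^ ((m : ℝ) / n) := by
  have h1 := Real.rpow_le_rpow (by positivity) h (show (0 : ℝ) ≤ (n : ℝ)⁻¹ by positivity)
  rw [Real.pow_rpow_inv_natCast hy hn] at h1
  rwa [div_eq_mul_inv, Real.rpow_mul hx, Real.rpow_natCast]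

lemma aux_pow_le (x y : ℝ) (m n : ℕ) (hn : n ≠ 0) (hx : 0 ≤ x) (hy : 0 ≤ y) (h : x ^ m ≤ y ^ n) :
    x ^ ((m : ℝ) / n) ≤ y := by
  have h1 := Real.rpow_le_rpow (by positivity) h (show (0 : ℝ) ≤ (n : ℝ)⁻¹ by positivity)
  rw [Real.pow_rpow_inv_natCast hy hn] at h1
  rwa [div_eq_mul_inv, Real.rpow_mul hx, Real.rpow_natCast]

set_option exponentiation.threshold 1000 in
lemma aux_n1 : (0.5494 : ℝ) ≤ (0.4003 : ℝ) ^ (0.654 : ℝ) := by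
  have := aux_le_pow 0.4003 0.5494 327 500 (by norm_num) (by norm_num) (by norm_num) (by norm_num)
  norm_num at this ⊢
  exact this

set_option exponentiation.threshold 1000 in
lemma aux_n2 : (1.9147 : ℝ) ^ (0.654 : ℝ) ≤ (1.5294 : ℝ) := by
  have := aux_pow_le 1.9147 1.5294 327 500 (by norm_num) (by norm_num) (by norm_num) (by norm_num)
  norm_num at this ⊢
  exact this

set_option exponentiation.threshold 1000 in
lemma aux_n3 : (0.9806 : ℝ) ≤ (346 / 327 : ℝ) ^ (-0.346 : ℝ) := by
  have := aux_le_pow (327 / 346) 0.9806 173 500 (by norm_num) (by norm_num) (by norm_num) (by norm_num)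
  rw [Real.rpow_neg (by norm_num), ← Real.inv_rpow (by norm_num)]
  norm_num at this ⊢
  exact this

set_option exponentiation.threshold 1000 in
lemma aux_n4 : (1.4003 : ℝ) ≤ (173 / 327 : ℝ) ^ (-(173 / 327) : ℝ) := by
  have := aux_le_pow (327 / 173) 1.4003 173 327 (by norm_num) (by norm_num) (by norm_num) (by norm_num)
  rw [Real.rpow_neg (by norm_num), ← Real.inv_rpow (by norm_num)]
  norm_num at this ⊢
  exact this

lemma aux_n5 : (1.414 : ℝ) ≤ (1 / 2 : ℝ) ^ (-(1 / 2) : ℝ) := by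
  have := aux_le_pow 2 1.414 1 2 (by norm_num) (by norm_num) (by norm_num) (by norm_num)
  rw [Real.rpow_neg (by norm_num), ← Real.inv_rpow (by norm_num)]
  norm_num at this ⊢
  exact this

lemma aux_case3 (p V : ℝ) (hp : 1 / 3 ≤ p) (hp1 : p ≤ 0.346)
    (hV : V = 1 / 2 + 5 / 2 * (p / (1 - p)) + 1 / (48 * p * (1 - p))) :
    V ^ (1 - p) ≤ 0.4003 ^ (1 - p) + (2 * (p / (1 - p))) ^ (-p) := by
  have h1p : 0 < 1 - p := by linarith
  have hp0 : 0 < p := by linarith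
  have hV0 : 0 < V := by rw [hV]; positivity
  obtain ⟨e, he⟩ : ∃ e, e = 0.346 - p := ⟨_, rfl⟩
  have he0 : 0 ≤ e := by linarith
  have he1 : e ≤ 0.0127 := by norm_num at *; linarith
  have hVle : V ≤ 1.9147 - 5 * e := by
    have : V = (24 * p * (1 - p) + 120 * p ^ 2 + 1) / (48 * p * (1 - p)) := by
      rw [hV]; field_simp; ring
    rw [this, div_le_iff₀ (by positivity), he]
    norm_num at *
    nlinarith [mul_nonneg (sub_nonneg.2 hp) (sub_nonneg.2 hp1), mul_nonneg (mul_nonneg (sub_nonneg.2 hp) (sub_nonneg.2 hp1)) hp0.le]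
  have hpe : 1 - p = 0.654 + e := by rw [he]; ring
  -- the constant power
  have a1 : 0.5494 * (1 - 1.5 * e) ≤ (0.4003 : ℝ) ^ (1 - p) := by
    rw [hpe, Real.rpow_add (by norm_num)]
    have h1 : 1 - 1.5 * e ≤ (0.4003 : ℝ) ^ e := by
      rw [Real.rpow_def_of_pos (by norm_num)]
      have := Real.add_one_le_exp (Real.log 0.4003 * e)
      have h2 := Real.one_sub_inv_le_log_of_pos (show (0 : ℝ) < 0.4003 by norm_num)
      have h3 : (-1.5 : ℝ) ≤ Real.log 0.4003 := le_trans (by norm_num) h2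
      nlinarith
    have h0 : 0 ≤ 1 - 1.5 * e := by norm_num at *; linarith
    exact mul_le_mul aux_n1 h1 h0 (by positivity)
  have a2 : 0.9806 ≤ (2 * (p / (1 - p))) ^ (-p) := by
    have hs1 : 1 ≤ 2 * (p / (1 - p)) := by
      rw [← mul_div_assoc, le_div_iff₀ h1p]; linarith
    have hs2 : 2 * (p / (1 - p)) ≤ 346 / 327 := by
      rw [← mul_div_assoc, div_le_iff₀ h1p]; norm_num at *; linarith
    calc _ ≤ _ := aux_n3
      _ ≤ (346 / 327 : ℝ) ^ (-p) := Real.rpow_le_rpow_of_exponent_le (by norm_num) (by linarith)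
      _ ≤ _ := Real.rpow_le_rpow_of_nonpos (by linarith) hs2 (by linarith)
  have a3 : V ^ (1 - p) ≤ 1.5294 * (1 - 0.78 * e) := by
    have h1 : Real.log V ≤ Real.log 1.9147 - 5 / 1.9147 * e := by
      have := Real.log_le_sub_one_of_pos (show 0 < V / 1.9147 by positivity)
      rw [Real.log_div hV0.ne' (by norm_num)] at this
      have h2 : V / 1.9147 ≤ 1 - 5 / 1.9147 * e := by
        rw [div_le_iff₀ (by norm_num)]; norm_num at *; linarith
      linarith
    have h2 : Real.log 1.9147 ≤ 0.9147 := by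
      have := Real.log_le_sub_one_of_pos (show (0 : ℝ) < 1.9147 by norm_num)
      norm_num at *; linarith
    have h3 : Real.log V * (1 - p) ≤ Real.log 1.9147 * 0.654 + (-0.79 * e) := by
      have h4 : Real.log V * (1 - p) ≤ (Real.log 1.9147 - 5 / 1.9147 * e) * (1 - p) :=
        mul_le_mul_of_nonneg_right h1 h1p.le
      rw [hpe] at h4 ⊢
      have h5 : Real.log 1.9147 * e ≤ 0.9147 * e := mul_le_mul_of_nonneg_right h2 he0
      norm_num at *
      nlinarith [mul_nonneg he0 he0]
    rw [Real.rpow_def_of_pos hV0]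
    have h6 := Real.exp_le_exp.2 h3
    rw [Real.exp_add, ← Real.rpow_def_of_pos (show (0 : ℝ) < 1.9147 by norm_num)] at h6
    have h7 : Real.exp (-0.79 * e) ≤ 1 - 0.78 * e := by
      rw [show -0.79 * e = -(0.79 * e) by ring, Real.exp_neg, inv_le_iff_one_le_mul₀ (Real.exp_pos _)]
      have h8 := Real.add_one_le_exp (0.79 * e)
      have h9 : 0 ≤ 1 - 0.78 * e := by norm_num at *; linarith
      have h10 := mul_le_mul_of_nonneg_left h8 h9
      norm_num at *
      nlinarith
    exact h6.trans (mul_le_mul aux_n2 h7 (Real.exp_pos _).le (by norm_num))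
  norm_num at *
  linarith

lemma aux_good (p s : ℝ) (hp : 0 < p) (hp1 : p ≤ 0.346) (hs : s = p / (1 - p)) :
    auxGood p s s 0 := by
  have hp2 : p ≤ 1 / 2 := by norm_num at *; linarith
  have h1p : 0 < 1 - p := by linarith
  have hs0 : 0 < s := by rw [hs]; positivity
  have hl2 := Real.log_two_lt_d9
  rcases le_total s 0.36 with h1 | h1
  · apply aux_good_of p s s 0 hp (by linarith) hs hs0 le_rfl
    have := aux_first p s s (by linarith) hs hs0 hs0.le (by
      rw [Real.rpow_def_of_pos hs0]
      refine (Real.add_one_le_exp s).trans (Real.exp_le_exp.2 ?_)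
      have h2 : Real.log s ≤ -1 := by
        rw [Real.log_le_iff_le_exp hs0, Real.exp_neg]
        refine h1.trans ?_
        rw [le_inv_comm₀ (by norm_num) (Real.exp_pos _)]
        have := Real.exp_one_lt_d9
        norm_num at *
        linarith
      nlinarith)
    rw [zero_add, add_comm 1 s]
    linarith
  rcases le_total p (1 / 3) with h2 | h2
  · have hs2 : s ≤ 1 / 2 := by rw [hs, div_le_iff₀ h1p]; linarith
    have h3 := aux_mono s (1 / 2) hs0 hs2 (by
      rw [one_div, Real.log_inv]; norm_num at *; linarith)
    obtain ⟨v, hv⟩ : ∃ v, v = (s + s) - (1 + s) / 2 + (1 + s) ^ 2 / (16 * (s + s)) := ⟨_, rfl⟩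
    have hvn : v = (s - (1 - s) / 2) + (1 + s) ^ 2 / (32 * s) := by rw [hv]; field_simp; ring
    have hv0 : 0 ≤ v := by
      have : v = (s + s - (1 + s) / 4) ^ 2 / (s + s) := by rw [hv]; field_simp; ring
      rw [this]; positivity
    have hv1 : v + 1 ≤ 1.414 := by
      have : v + 1 = (16 * s + 48 * s ^ 2 + (1 + s) ^ 2) / (32 * s) := by rw [hv]; field_simp; ring
      rw [this, div_le_iff₀ (by positivity)]
      norm_num at *
      nlinarith
    refine aux_good_prev p s s 0 v le_rfl ?_ (aux_first p s v (by linarith) hs hs0 hv0 ?_)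
    · exact aux_good_of p s (s + s) v hp (by linarith) hs (by linarith) hv0
        (aux_thr p s (s + s) v hp hp2 hs (by linarith) (by norm_num at *; linarith) hv)
    · exact hv1.trans (aux_n5.trans h3)
  · have hs2 : s ≤ 173 / 327 := by rw [hs, div_le_iff₀ h1p]; norm_num at *; linarith
    have hs3 : 1 / 2 ≤ s := by rw [hs, le_div_iff₀ h1p]; linarith
    have h3 := aux_mono s (173 / 327) hs0 hs2 (by
      have : Real.log (1 / 2) ≤ Real.log (173 / 327) := Real.log_le_log (by norm_num) (by norm_num)
      rw [one_div, Real.log_inv] at this; norm_num at *; linarith)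
    obtain ⟨v, hv⟩ : ∃ v, v = (s + s + s) - (1 + s) / 2 + (1 + s) ^ 2 / (16 * (s + s + s)) := ⟨_, rfl⟩
    have hv0 : 0 ≤ v := by
      have : v = (s + s + s - (1 + s) / 4) ^ 2 / (s + s + s) := by rw [hv]; field_simp; ring
      rw [this]; positivity
    refine aux_good_prev p s s 0 0.4003 le_rfl ?_
      (aux_first p s 0.4003 (by linarith) hs hs0 (by norm_num) ?_)
    · refine aux_good_prev p s (s + s) 0.4003 v (by norm_num) ?_ ?_
      · exact aux_good_of p s (s + s + s) v hp (by linarith) hs (by linarith) hv0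
          (aux_thr p s (s + s + s) v hp hp2 hs (by linarith) (by linarith) hv)
      · have := aux_case3 p (v + 1) h2 hp1 (by rw [hv, hs]; field_simp; ring)
        rwa [← hs, two_mul] at this
    · refine le_trans (by norm_num) (aux_n4.trans h3)

/-- For `0 < p ≤ 0.346`:
`∑_{n≥1} ((1/n) ∑_{k≥n} a_k)^p ≥ (p/(1-p))^p ∑_{n≥1} a_n^p`. -/
theorem stmt_1 (p : ℝ) (hp0 : 0 < p) (hp1 : p ≤ 0.346)
    (a : ℕ → ℝ) (ha : ∀ n, 1 ≤ n → 0 ≤ a n) :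
    ENNReal.ofReal ((p / (1 - p)) ^ p) * ∑' n : ℕ, ENNReal.ofReal (a (n + 1)) ^ p ≤
      ∑' n : ℕ, (((n : ℝ≥0∞) + 1)⁻¹ * ∑' k : ℕ, ENNReal.ofReal (a (n + 1 + k))) ^ p := by
  have hp2 : p < 1 := by norm_num at *; linarith
  have h1p : 0 < 1 - p := by linarith
  exact aux_main p (p / (1 - p)) hp0 hp2 (by positivity) (aux_good p _ hp0 hp1 rfl) a ha
end

section
/- Let p be a real number such that either 0 < p ≤ 0.346, or 1/3 < p < 1/2 and 2^{p/(1-p)}·( ((1-p)/p)^{1/(1-p)} − (1-p)/p ) − (1 + (3 − 1/p)/2)^{1/(1-p)} ≥ 0. Let q = p/(p−1) (so that 1/p + 1/q = 1 and q < 0). Then for every sequence (a_n)_{n≥1} of strictly positive reals, ∑_{n=1}^∞ ( ∑_{k=1}^n a_k/k )^q ≤ (p/(1-p))^q · ∑_{n=1}^∞ a_n^q. -/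
open scoped ENNReal

lemma aux_h1 (r u y : ℝ) (hu : 0 ≤ u) (hy : 0 ≤ y) :
    HasDerivAt (fun y : ℝ => (1 + y) ^ (-r) * (1 + u * y) ^ (1 + r))
      ((1 + y) ^ (-r - 1) * (1 + u * y) ^ r * ((1 + r) * u - r + u * y)) y := by
  have hA : (0:ℝ) < 1 + y := by positivity
  have hB : (0:ℝ) < 1 + u * y := by positivity
  have d1 : HasDerivAt (fun y : ℝ => 1 + y) 1 y := (hasDerivAt_id y).const_add 1
  have d2 : HasDerivAt (fun y : ℝ => 1 + u * y) u y := by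
    simpa using ((hasDerivAt_id y).const_mul u).const_add 1
  have e1 := d1.rpow_const (p := -r) (Or.inl hA.ne')
  have e2 := d2.rpow_const (p := 1 + r) (Or.inl hB.ne')
  have e := e1.mul e2
  refine e.congr_deriv ?_
  have r1 : (1 + y) ^ (-r) = (1 + y) ^ (-r - 1) * (1 + y) := by
    rw [← Real.rpow_add_one hA.ne']; congr 1; ring
  have r2 : (1 + u * y) ^ (1 + r) = (1 + u * y) ^ r * (1 + u * y) := by
    rw [← Real.rpow_add_one hB.ne']; congr 1; ring
  have r3 : (1 + u * y) ^ (1 + r - 1) = (1 + u * y) ^ r := by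
    congr 1; ring
  rw [r3, r2, r1]
  ring

lemma aux_h2 (r u y : ℝ) (hu : 0 ≤ u) (hy : 0 ≤ y) :
    HasDerivAt (fun y : ℝ => (1 + y) ^ (-r - 1) * (1 + u * y) ^ r * ((1 + r) * u - r + u * y))
      (r * (1 + r) * (1 - u) ^ 2 * ((1 + y) ^ (-r - 2) * (1 + u * y) ^ (r - 1))) y := by
  have hA : (0:ℝ) < 1 + y := by positivity
  have hB : (0:ℝ) < 1 + u * y := by positivity
  have d1 : HasDerivAt (fun y : ℝ => 1 + y) 1 y := (hasDerivAt_id y).const_add 1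
  have d2 : HasDerivAt (fun y : ℝ => 1 + u * y) u y := by
    simpa using ((hasDerivAt_id y).const_mul u).const_add 1
  have d3 : HasDerivAt (fun y : ℝ => (1 + r) * u - r + u * y) u y := by
    simpa using ((hasDerivAt_id y).const_mul u).const_add ((1 + r) * u - r)
  have e1 := d1.rpow_const (p := -r - 1) (Or.inl hA.ne')
  have e2 := d2.rpow_const (p := r) (Or.inl hB.ne')
  have e := (e1.mul e2).mul d3
  refine e.congr_deriv ?_
  have r1 : (1 + y) ^ (-r - 1) = (1 + y) ^ (-r - 2) * (1 + y) := by
    rw [← Real.rpow_add_one hA.ne']; congr 1; ring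
  have r2 : (1 + u * y) ^ r = (1 + u * y) ^ (r - 1) * (1 + u * y) := by
    rw [← Real.rpow_add_one hB.ne']; congr 1; ring
  have r3 : (1 + y) ^ (-r - 1 - 1) = (1 + y) ^ (-r - 2) := by
    congr 1; ring
  simp only [Pi.mul_apply]
  rw [r3, r2, r1]
  ring

lemma aux_G2 (r c t y : ℝ) (hr : 0 < r) (hr1 : r < 1) (hc : 0 < c) (hc1 : c ≤ 1)
    (ht : c ≤ t) (hy : 0 ≤ y) :
    c ^ 2 * ((1 + y) ^ (-r - 2) * (1 + (1 - c) * y) ^ (r - 1)) ≤ t ^ 2 * (1 + t * y) ^ (r - 1) := by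
  have hu : 0 ≤ 1 - c := by linarith
  have htp : 0 < t := by linarith
  have hA : (0:ℝ) < 1 + y := by positivity
  have hB : (1:ℝ) ≤ 1 + (1 - c) * y := by nlinarith
  have hT : (0:ℝ) < 1 + t * y := by positivity
  have b1 : (1 + (1 - c) * y) ^ (r - 1) ≤ 1 := Real.rpow_le_one_of_one_le_of_nonpos hB (by linarith)
  have b2 : (1 + y) ^ (-r - 2) ≤ (1 + y) ^ (r - 1) :=
    Real.rpow_le_rpow_of_exponent_le (by linarith) (by linarith)
  have b3 : 1 + t * y ≤ (t / c) * (1 + y) := by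
    rw [div_mul_eq_mul_div, le_div_iff₀ hc]
    nlinarith [mul_nonneg htp.le (mul_nonneg hu hy)]
  have b4 : ((t / c) * (1 + y)) ^ (r - 1) ≤ (1 + t * y) ^ (r - 1) :=
    Real.rpow_le_rpow_of_nonpos hT b3 (by linarith)
  rw [Real.mul_rpow (by positivity) hA.le] at b4
  have htc : 1 ≤ t / c := by rwa [le_div_iff₀ hc, one_mul]
  have b5 : (t / c) ^ (-2 : ℝ) ≤ (t / c) ^ (r - 1) :=
    Real.rpow_le_rpow_of_exponent_le htc (by linarith)
  have b6 : (t / c) ^ (-2 : ℝ) = c ^ 2 / t ^ 2 := by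
    rw [Real.rpow_neg (by positivity), Real.rpow_two, div_pow, inv_div]
  rw [b6] at b5
  have hP : 0 < (1 + y) ^ (r - 1) := Real.rpow_pos_of_pos hA _
  have hP2 : 0 < (1 + y) ^ (-r - 2) := Real.rpow_pos_of_pos hA _
  calc c ^ 2 * ((1 + y) ^ (-r - 2) * (1 + (1 - c) * y) ^ (r - 1))
      ≤ c ^ 2 * ((1 + y) ^ (r - 1) * 1) := by gcongr
    _ = t ^ 2 * (c ^ 2 / t ^ 2 * (1 + y) ^ (r - 1)) := by field_simp
    _ ≤ t ^ 2 * ((t / c) ^ (r - 1) * (1 + y) ^ (r - 1)) := by gcongr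
    _ ≤ _ := by gcongr

lemma aux_mono_s2 (F F' : ℝ → ℝ) (h : ∀ y, 0 ≤ y → HasDerivAt F (F' y) y)
    (h' : ∀ y, 0 ≤ y → 0 ≤ F' y) (h0 : F 0 = 0) (y : ℝ) (hy : 0 ≤ y) : 0 ≤ F y := by
  have : MonotoneOn F (Set.Ici 0) := by
    apply monotoneOn_of_deriv_nonneg (convex_Ici 0)
    · exact fun x hx => (h x hx).continuousAt.continuousWithinAt
    · intro x hx
      rw [interior_Ici] at hx
      exact (h x (le_of_lt hx)).differentiableAt.differentiableWithinAt
    · intro x hx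
      rw [interior_Ici] at hx
      rw [(h x (le_of_lt hx)).deriv]
      exact h' x (le_of_lt hx)
  have := this (Set.mem_Ici.2 le_rfl) (Set.mem_Ici.2 hy) hy
  rwa [h0] at this

lemma aux_G (r c y : ℝ) (hr : 0 < r) (hr1 : r < 1) (hc : 0 < c) (hc1 : c ≤ 1)
    (hrc : 2 * r * c ≤ 1) (hy : 0 ≤ y) :
    y / r + (1 + y) ^ (-r) * (1 + (1 - c) * y) ^ (1 + r) ≤ (1 + (1 / r - c) * y) ^ (1 + r) := by
  have ht : c ≤ 1 / r - c := by
    have : 2 * c ≤ 1 / r := by rw [le_div_iff₀ hr]; linarith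
    linarith
  obtain ⟨t, htd⟩ : ∃ t, t = 1 / r - c := ⟨_, rfl⟩
  rw [← htd] at ht ⊢
  have htp : 0 < t := by linarith
  have hu : 0 ≤ 1 - c := by linarith
  have dT : ∀ y : ℝ, HasDerivAt (fun y : ℝ => 1 + t * y) t y := fun y => by
    simpa using ((hasDerivAt_id y).const_mul t).const_add 1
  have key1 : ∀ y : ℝ, 0 ≤ y → 0 ≤ (1 + r) * (t * (1 + t * y) ^ r) - 1 / r -
      (1 + y) ^ (-r - 1) * (1 + (1 - c) * y) ^ r * ((1 + r) * (1 - c) - r + (1 - c) * y) := by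
    refine aux_mono_s2 _ (fun y => (1 + r) * (t * (t * r * (1 + t * y) ^ (r - 1))) -
      r * (1 + r) * (1 - (1 - c)) ^ 2 * ((1 + y) ^ (-r - 2) * (1 + (1 - c) * y) ^ (r - 1))) ?_ ?_ ?_
    · intro y hy
      have hT : (0:ℝ) < 1 + t * y := by positivity
      have e1 := (dT y).rpow_const (p := r) (Or.inl hT.ne')
      exact (((e1.const_mul t).const_mul (1 + r)).sub_const (1 / r)).sub (aux_h2 r (1 - c) y hu hy)
    · intro y hy
      have := aux_G2 r c t y hr hr1 hc hc1 ht hy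
      have h2 := mul_le_mul_of_nonneg_left this (show 0 ≤ r * (1 + r) by positivity)
      have h3 : (1 - (1 - c)) ^ 2 = c ^ 2 := by ring
      simp only [h3]
      linarith
    · simp [htd]
      field_simp
      ring
  have key := aux_mono_s2 (fun y => (1 + t * y) ^ (1 + r) - y * (1 / r) -
      (1 + y) ^ (-r) * (1 + (1 - c) * y) ^ (1 + r)) _ (fun y hy => ?_) key1 (by simp) y hy
  · simp only [mul_one_div] at key
    linarith
  · have hT : (0:ℝ) < 1 + t * y := by positivity
    have e1 := (dT y).rpow_const (p := 1 + r) (Or.inl hT.ne')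
    have e := (e1.sub ((hasDerivAt_id y).mul_const (1 / r))).sub (aux_h1 r (1 - c) y hu hy)
    refine e.congr_deriv ?_
    rw [show 1 + r - 1 = r by ring]
    ring

/-- the weights -/
noncomputable def ww (r c : ℝ) (x : ℝ) : ℝ := r * (x ^ (-r) * (x - c) ^ (1 + r))

lemma aux_step_s2 (r c x : ℝ) (hr : 0 < r) (hr1 : r < 1) (hc : 0 < c) (hc1 : c ≤ 1)
    (hrc : 2 * r * c ≤ 1) (hx : 0 < x) :
    1 + ww r c (x + 1) ≤ r * (x ^ (-r) * (x + (1 / r - c)) ^ (1 + r)) := by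
  have h := aux_G r c (1 / x) hr hr1 hc hc1 hrc (by positivity)
  have ht : 0 ≤ 1 / r - c := by
    have : 2 * c ≤ 1 / r := by rw [le_div_iff₀ hr]; linarith
    linarith
  have hu : 0 ≤ 1 - c := by linarith
  have hx' : x ^ (-r) * x ^ (1 + r) = x := by
    rw [← Real.rpow_add hx]; simp
  have e1 : x + (1 / r - c) = x * (1 + (1 / r - c) * (1 / x)) := by field_simp
  have e2 : x + 1 = x * (1 + 1 / x) := by field_simp
  have e3 : x + 1 - c = x * (1 + (1 - c) * (1 / x)) := by field_simp; ring
  have h2 := mul_le_mul_of_nonneg_left h (show 0 ≤ r * x by positivity)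
  unfold ww
  rw [e3, e1, e2, Real.mul_rpow hx.le (by positivity), Real.mul_rpow hx.le (by positivity),
    Real.mul_rpow hx.le (by positivity)]
  have h3 : r * x * (1 / x / r) = 1 := by field_simp
  calc _ = 1 + r * (x ^ (-r) * x ^ (1 + r)) *
        ((1 + 1 / x) ^ (-r) * (1 + (1 - c) * (1 / x)) ^ (1 + r)) := by ring
    _ = r * x * (1 / x / r + (1 + 1 / x) ^ (-r) * (1 + (1 - c) * (1 / x)) ^ (1 + r)) := by
        rw [hx', mul_add, h3]
    _ ≤ _ := h2
    _ = r * (x ^ (-r) * x ^ (1 + r)) * (1 + (1 / r - c) * (1 / x)) ^ (1 + r) := by rw [hx']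
    _ = _ := by ring

lemma aux_radon (r x₁ x₂ y₁ y₂ : ℝ) (hr : 0 < r) (hx₁ : 0 ≤ x₁) (hx₂ : 0 ≤ x₂)
    (hy₁ : 0 < y₁) (hy₂ : 0 < y₂) :
    (x₁ + x₂) ^ (1 + r) * (y₁ + y₂) ^ (-r) ≤
      x₁ ^ (1 + r) * y₁ ^ (-r) + x₂ ^ (1 + r) * y₂ ^ (-r) := by
  have hs : 0 < y₁ + y₂ := by positivity
  have h := (convexOn_rpow (p := 1 + r) (by linarith)).2
    (show x₁ / y₁ ∈ Set.Ici (0:ℝ) from Set.mem_Ici.2 (by positivity))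
    (show x₂ / y₂ ∈ Set.Ici (0:ℝ) from Set.mem_Ici.2 (by positivity))
    (show 0 ≤ y₁ / (y₁ + y₂) by positivity) (show 0 ≤ y₂ / (y₁ + y₂) by positivity)
    (by field_simp)
  simp only [smul_eq_mul] at h
  have e : y₁ / (y₁ + y₂) * (x₁ / y₁) + y₂ / (y₁ + y₂) * (x₂ / y₂) = (x₁ + x₂) / (y₁ + y₂) := by
    field_simp
  rw [e] at h
  have g : ∀ x y : ℝ, 0 ≤ x → 0 < y → y * (x / y) ^ (1 + r) = x ^ (1 + r) * y ^ (-r) := by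
    intro x y hx hy
    rw [Real.div_rpow hx hy.le, Real.rpow_neg hy.le, Real.rpow_add hy, Real.rpow_one]
    have := Real.rpow_pos_of_pos hy r
    field_simp
  have h2 := mul_le_mul_of_nonneg_left h hs.le
  rw [g _ _ (by positivity) hs] at h2
  rw [← g x₁ y₁ hx₁ hy₁, ← g x₂ y₂ hx₂ hy₂]
  refine h2.trans (le_of_eq ?_)
  field_simp

lemma aux_ind (r c : ℝ) (hr : 0 < r) (hr1 : r < 1) (hc : 0 < c) (hc1 : c ≤ 1)
    (hrc : 2 * r * c ≤ 1) (hbase : 1 + ww r c 2 ≤ r ^ (-r))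
    (a : ℕ → ℝ) (ha : ∀ n, 1 ≤ n → 0 < a n) (N : ℕ) :
    ∑ n ∈ Finset.range (N + 1), (∑ k ∈ Finset.Icc 1 (n + 1), a k / (k : ℝ)) ^ (-r) +
      ww r c (N + 2) * (∑ k ∈ Finset.Icc 1 (N + 1), a k / (k : ℝ)) ^ (-r) ≤
    r ^ (-r) * ∑ n ∈ Finset.range (N + 1), a (n + 1) ^ (-r) := by
  induction N with
  | zero =>
    simp
    have := mul_le_mul_of_nonneg_right hbase (Real.rpow_pos_of_pos (ha 1 le_rfl) (-r)).le
    linarith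
  | succ N ih =>
    rw [Finset.sum_range_succ, Finset.sum_range_succ _ (N + 1), mul_add]
    set S := ∑ k ∈ Finset.Icc 1 (N + 1), a k / (k : ℝ) with hS
    have hSp : 0 < S := by
      apply Finset.sum_pos
      · intro k hk
        have hk1 := (Finset.mem_Icc.1 hk).1
        have : (0:ℝ) < k := by exact_mod_cast hk1
        exact div_pos (ha k hk1) this
      · exact ⟨1, by simp⟩
    have hS2 : ∑ k ∈ Finset.Icc 1 (N + 1 + 1), a k / (k : ℝ) = S + a (N + 2) / (N + 2) := by
      rw [Finset.sum_Icc_succ_top (by omega)]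
      push_cast
      rw [hS]; congr 2; ring
    rw [hS2]
    have hap : 0 < a (N + 2) := ha _ (by omega)
    set x : ℝ := N + 2 with hx
    have hxp : 0 < x := by positivity
    have hx2 : 2 ≤ x := by rw [hx]; linarith [(Nat.cast_nonneg N : (0:ℝ) ≤ N)]
    have e1 : ((N + 1 : ℕ) : ℝ) + 2 = x + 1 := by rw [hx]; push_cast; ring
    rw [e1]
    set d := a (N + 2) / x with hd
    have hdp : 0 < d := by positivity
    have had : a (N + 1 + 1) = x * d := by rw [hd]; field_simp
    rw [had]
    have h1 := aux_step_s2 r c x hr hr1 hc hc1 hrc hxp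
    have h2 := aux_radon r (x - c) (1 / r) S d hr (by linarith) (by positivity) hSp hdp
    have hxr := Real.rpow_pos_of_pos hxp (-r)
    have hsd := Real.rpow_pos_of_pos (show 0 < S + d by positivity) (-r)
    have h3 := mul_le_mul_of_nonneg_left h2 (show 0 ≤ r * x ^ (-r) by positivity)
    have h4 := mul_le_mul_of_nonneg_right h1 hsd.le
    rw [Real.mul_rpow hxp.le hdp.le]
    have e3 : x - c + 1 / r = x + (1 / r - c) := by ring
    rw [e3] at h3
    have e4 : r * (1 / r) ^ (1 + r) = r ^ (-r) := by
      rw [one_div, Real.inv_rpow hr.le, ← Real.rpow_neg hr.le]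
      nth_rewrite 1 [← Real.rpow_one r]
      rw [← Real.rpow_add hr]; congr 1; ring
    have e5 : r * x ^ (-r) * ((x - c) ^ (1 + r) * S ^ (-r) + (1 / r) ^ (1 + r) * d ^ (-r))
        = ww r c x * S ^ (-r) + r ^ (-r) * (x ^ (-r) * d ^ (-r)) := by
      rw [← e4]; unfold ww; ring
    rw [e5] at h3
    nlinarith

lemma ww_nonneg (r c x : ℝ) (hr : 0 < r) (hx : 0 < x) (hxc : c ≤ x) : 0 ≤ ww r c x := by
  unfold ww
  have : 0 ≤ x - c := by linarith
  positivity

lemma aux_main_s2 (r c : ℝ) (hr : 0 < r) (hr1 : r < 1) (hc : 0 < c) (hc1 : c ≤ 1)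
    (hrc : 2 * r * c ≤ 1) (hbase : 1 + ww r c 2 ≤ r ^ (-r))
    (a : ℕ → ℝ) (ha : ∀ n, 1 ≤ n → 0 < a n) :
    ∑' n : ℕ, ENNReal.ofReal ((∑ k ∈ Finset.Icc 1 (n + 1), a k / (k : ℝ)) ^ (-r)) ≤
      ENNReal.ofReal (r ^ (-r)) * ∑' n : ℕ, ENNReal.ofReal (a (n + 1) ^ (-r)) := by
  have hSp : ∀ n : ℕ, 0 ≤ ∑ k ∈ Finset.Icc 1 (n + 1), a k / (k : ℝ) := by
    intro n
    apply Finset.sum_nonneg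
    intro k hk
    exact div_nonneg (ha k (Finset.mem_Icc.1 hk).1).le (Nat.cast_nonneg k)
  apply ENNReal.tsum_le_of_sum_range_le
  intro N
  refine le_trans (Finset.sum_le_sum_of_subset (Finset.range_subset_range.2 (Nat.le_succ N))) ?_
  rw [← ENNReal.ofReal_sum_of_nonneg (fun n _ => Real.rpow_nonneg (hSp n) _)]
  have h := aux_ind r c hr hr1 hc hc1 hrc hbase a ha N
  have hw : 0 ≤ ww r c (N + 2) * (∑ k ∈ Finset.Icc 1 (N + 1), a k / (k : ℝ)) ^ (-r) :=
    mul_nonneg (ww_nonneg r c _ hr (by positivity)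
      (by linarith [(Nat.cast_nonneg N : (0:ℝ) ≤ N)])) (Real.rpow_nonneg (hSp N) _)
  refine le_trans (ENNReal.ofReal_le_ofReal (le_trans (le_add_of_nonneg_right hw) h)) ?_
  rw [ENNReal.ofReal_mul (by positivity), ENNReal.ofReal_sum_of_nonneg
    (fun n _ => Real.rpow_nonneg (ha _ (by omega)).le _)]
  gcongr
  exact ENNReal.sum_le_tsum _

lemma aux_base1 (r : ℝ) (hr : 0 < r) (hr1 : r ≤ 1 / 2) : 1 + ww r 1 2 ≤ r ^ (-r) := by
  have h := aux_step_s2 r 1 1 hr (by linarith) one_pos le_rfl (by linarith) one_pos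
  have e4 : r * (1 / r) ^ (1 + r) = r ^ (-r) := by
    rw [one_div, Real.inv_rpow hr.le, ← Real.rpow_neg hr.le]
    nth_rewrite 1 [← Real.rpow_one r]
    rw [← Real.rpow_add hr]; congr 1; ring
  rw [show (1:ℝ) + 1 = 2 by norm_num, show (1:ℝ) + (1 / r - 1) = 1 / r by ring, Real.one_rpow,
    one_mul, e4] at h
  exact h

lemma num1 : (1.4:ℝ) ≤ (9 / 17 : ℝ) ^ (-(9 / 17) : ℝ) := by
  rw [Real.rpow_neg (by norm_num), ← Real.inv_rpow (by norm_num)]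
  refine le_of_pow_le_pow_left₀ (n := 17) (by norm_num) (by positivity) ?_
  rw [← Real.rpow_natCast (_ ^ _), ← Real.rpow_mul (by norm_num),
    show (9 / 17 * ((17 : ℕ) : ℝ) : ℝ) = ((9 : ℕ) : ℝ) by norm_num, Real.rpow_natCast]
  norm_num

lemma num2 : (2 : ℝ) ^ (-(9 / 17) : ℝ) ≤ 0.693 := by
  rw [Real.rpow_neg (by norm_num), ← Real.inv_rpow (by norm_num)]
  refine le_of_pow_le_pow_left₀ (n := 17) (by norm_num) (by norm_num) ?_
  rw [← Real.rpow_natCast (_ ^ _), ← Real.rpow_mul (by norm_num),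
    show (9 / 17 * ((17 : ℕ) : ℝ) : ℝ) = ((9 : ℕ) : ℝ) by norm_num, Real.rpow_natCast]
  norm_num

lemma num3 : (19 / 18 : ℝ) ^ (26 / 17 : ℝ) ≤ 1.0865 := by
  refine le_of_pow_le_pow_left₀ (n := 17) (by norm_num) (by norm_num) ?_
  rw [← Real.rpow_natCast (_ ^ _), ← Real.rpow_mul (by norm_num),
    show (26 / 17 * ((17 : ℕ) : ℝ) : ℝ) = ((26 : ℕ) : ℝ) by norm_num, Real.rpow_natCast]
  norm_num

lemma aux_base2 (r : ℝ) (hr : 1 / 2 ≤ r) (hr1 : r ≤ 9 / 17) :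
    1 + ww r (1 / (2 * r)) 2 ≤ r ^ (-r) := by
  have hrp : 0 < r := by linarith
  have a1 : (1.4:ℝ) ≤ r ^ (-r) := by
    refine num1.trans ?_
    rw [Real.rpow_def_of_pos (by norm_num), Real.rpow_def_of_pos hrp, Real.exp_le_exp]
    have l1 : Real.log (r / (9 / 17)) ≤ r / (9 / 17) - 1 := Real.log_le_sub_one_of_pos (by positivity)
    rw [Real.log_div hrp.ne' (by norm_num)] at l1
    have l2 : 1 - (9 / 17 : ℝ)⁻¹ ≤ Real.log (9 / 17) := Real.one_sub_inv_le_log_of_pos (by norm_num)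
    norm_num at l2
    set L := Real.log (9 / 17)
    set M := Real.log r
    have h1 := mul_le_mul_of_nonneg_left l1 hrp.le
    have h2 := mul_le_mul_of_nonneg_left l2 (show 0 ≤ 9 / 17 - r by linarith)
    nlinarith
  have a2 : r * 2 ^ (-r) ≤ 9 / 17 * 0.693 := by
    have e : (2:ℝ) ^ (-r) = 2 ^ (-(9 / 17) : ℝ) * 2 ^ (9 / 17 - r) := by
      rw [← Real.rpow_add (by norm_num)]; congr 1; ring
    have b : r * 2 ^ (9 / 17 - r) ≤ 9 / 17 := by
      have c1 : (2:ℝ) ^ (9 / 17 - r) ≤ 1 + (9 / 17 - r) * 1 := by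
        have := rpow_one_add_le_one_add_mul_self (s := 1) (by norm_num)
          (show 0 ≤ 9 / 17 - r by linarith) (by linarith)
        norm_num at this ⊢
        linarith
      nlinarith
    have hp : (0:ℝ) < 2 ^ (9 / 17 - r) := by positivity
    rw [e]
    calc _ = 2 ^ (-(9 / 17) : ℝ) * (r * 2 ^ (9 / 17 - r)) := by ring
      _ ≤ 0.693 * (9 / 17) := mul_le_mul num2 b (by positivity) (by norm_num)
      _ = _ := by ring
  have a3 : (2 - 1 / (2 * r)) ^ (1 + r) ≤ 1.0865 := by
    have b1 : 1 ≤ 2 - 1 / (2 * r) := by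
      have : 1 / (2 * r) ≤ 1 := by rw [div_le_one (by positivity)]; linarith
      linarith
    have b2 : 2 - 1 / (2 * r) ≤ 19 / 18 := by
      have : 17 / 18 ≤ 1 / (2 * r) := by rw [le_div_iff₀ (by positivity)]; linarith
      linarith
    calc _ ≤ (19 / 18 : ℝ) ^ (1 + r) := Real.rpow_le_rpow (by linarith) b2 (by linarith)
      _ ≤ (19 / 18 : ℝ) ^ (26 / 17 : ℝ) :=
        Real.rpow_le_rpow_of_exponent_le (by norm_num) (by linarith)
      _ ≤ _ := num3
  have b1 : 0 ≤ 2 - 1 / (2 * r) := by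
    have : 1 / (2 * r) ≤ 1 := by rw [div_le_one (by positivity)]; linarith
    linarith
  have := mul_le_mul a2 a3 (Real.rpow_nonneg b1 _) (by norm_num)
  unfold ww
  rw [← mul_assoc]
  norm_num at this a1 ⊢
  linarith

lemma aux_base3 (r : ℝ) (hrp : 0 < r)
    (h : 0 ≤ (2:ℝ) ^ r * ((1 / r) ^ (1 + r) - 1 / r) - (2 - 1 / (2 * r)) ^ (1 + r)) :
    1 + ww r (1 / (2 * r)) 2 ≤ r ^ (-r) := by
  have e4 : r * (1 / r) ^ (1 + r) = r ^ (-r) := by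
    rw [one_div, Real.inv_rpow hrp.le, ← Real.rpow_neg hrp.le]
    nth_rewrite 1 [← Real.rpow_one r]
    rw [← Real.rpow_add hrp]; congr 1; ring
  have e5 : (2:ℝ) ^ (-r) * 2 ^ r = 1 := by
    rw [← Real.rpow_add (by norm_num)]; simp
  have h2 := mul_nonneg (show 0 ≤ r * (2:ℝ) ^ (-r) by positivity) h
  unfold ww
  rw [← e4]
  have e6 : r * (1 / r) = 1 := by field_simp
  have : r * (2:ℝ) ^ (-r) * (2 ^ r * ((1 / r) ^ (1 + r) - 1 / r) - (2 - 1 / (2 * r)) ^ (1 + r))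
    = ((2:ℝ) ^ (-r) * 2 ^ r) * (r * (1 / r) ^ (1 + r) - r * (1 / r)) -
      r * (2 ^ (-r) * (2 - 1 / (2 * r)) ^ (1 + r)) := by ring
  rw [this, e5, e6] at h2
  linarith

/-- Dual version: for `p` with `0 < p ≤ 0.346`, or `1/3 < p < 1/2` satisfying
condition (1.4), and `q = p/(p-1)`:
`∑_{n≥1} (∑_{k=1}^n a_k/k)^q ≤ (p/(1-p))^q ∑_{n≥1} a_n^q` for positive `a`. -/
theorem stmt_2 (p q : ℝ)
    (hp : (0 < p ∧ p ≤ 0.346) ∨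
      (1 / 3 < p ∧ p < 1 / 2 ∧
        0 ≤ (2 : ℝ) ^ (p / (1 - p)) *
            (((1 - p) / p) ^ ((1 : ℝ) / (1 - p)) - (1 - p) / p) -
            (1 + (3 - 1 / p) / 2) ^ ((1 : ℝ) / (1 - p))))
    (hq : q = p / (p - 1))
    (a : ℕ → ℝ) (ha : ∀ n, 1 ≤ n → 0 < a n) :
    ∑' n : ℕ, ENNReal.ofReal ((∑ k ∈ Finset.Icc 1 (n + 1), a k / (k : ℝ)) ^ q) ≤
      ENNReal.ofReal ((p / (1 - p)) ^ q) * ∑' n : ℕ, ENNReal.ofReal (a (n + 1) ^ q) := by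
  have hp0 : 0 < p := by rcases hp with h | h <;> linarith [h.1]
  have hp1 : p < 1 / 2 := by
    rcases hp with h | h
    · have := h.2
      norm_num at this
      linarith
    · exact h.2.1
  have h1p : 0 < 1 - p := by linarith
  obtain ⟨r, hrd⟩ : ∃ r, r = p / (1 - p) := ⟨_, rfl⟩
  have hr : 0 < r := by rw [hrd]; positivity
  have hr1 : r < 1 := by rw [hrd, div_lt_one h1p]; linarith
  have hqr : q = -r := by
    rw [hq, hrd, ← div_neg]; congr 1; ring
  rw [hqr, ← hrd]
  have fin2 : 1 / 2 ≤ r → 1 + ww r (1 / (2 * r)) 2 ≤ r ^ (-r) → _ := fun h2 hb =>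
    aux_main_s2 r (1 / (2 * r)) hr hr1 (by positivity)
      (by rw [div_le_one (by positivity)]; linarith) (by field_simp; exact le_rfl) hb a ha
  rcases hp with h | ⟨h3, -, hc⟩
  · by_cases h2 : r ≤ 1 / 2
    · exact aux_main_s2 r 1 hr hr1 one_pos le_rfl (by linarith) (aux_base1 r hr h2) a ha
    · push Not at h2
      refine fin2 h2.le (aux_base2 r h2.le ?_)
      have := h.2
      norm_num at this
      rw [hrd, div_le_iff₀ h1p]
      linarith
  · have h2 : 1 / 2 ≤ r := by rw [hrd, le_div_iff₀ h1p]; linarith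
    refine fin2 h2 (aux_base3 r hr ?_)
    have g1 : (1 - p) / p = 1 / r := by rw [hrd, one_div_div]
    have g2 : 1 / (1 - p) = 1 + r := by rw [hrd]; field_simp; ring
    have g3 : 1 + (3 - 1 / p) / 2 = 2 - 1 / (2 * r) := by rw [hrd]; field_simp; ring
    rwa [g1, g2, g3, ← hrd] at hc
end

section
/- For all real numbers y and t with 0 ≤ y ≤ 1 and 1/2 < t < 1, one has (1 + y/(2t))^{1+t} − (1+y)^{−t}·(1 + (2t−1)y/(2t))^{1+t} − y/t ≥ 0. -/
theorem aux_mono_s3 (f f' : ℝ → ℝ) (h0 : f 0 = 0) (hd : ∀ x, 0 ≤ x → HasDerivAt f (f' x) x)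
    (hp : ∀ x, 0 ≤ x → 0 ≤ f' x) (y : ℝ) (hy : 0 ≤ y) : 0 ≤ f y := by
  have hm : MonotoneOn f (Set.Ici 0) := by
    apply monotoneOn_of_deriv_nonneg (convex_Ici 0)
    · intro x hx
      exact (hd x hx).continuousAt.continuousWithinAt
    · intro x hx
      exact (hd x (interior_subset hx)).differentiableAt.differentiableWithinAt
    · intro x hx
      rw [(hd x (interior_subset hx)).deriv]
      exact hp x (interior_subset hx)
  have := hm (Set.mem_Ici.2 le_rfl) (Set.mem_Ici.2 hy) hy
  rwa [h0] at this

theorem aux_u (a x : ℝ) (hx : 0 ≤ x) :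
    HasDerivAt (fun x : ℝ => (1 + (1 - a) * x) / (1 + x)) (-a / (1 + x) ^ 2) x := by
  have h1 : HasDerivAt (fun x : ℝ => 1 + (1 - a) * x) (1 - a) x := by
    simpa using ((hasDerivAt_id x).const_mul (1 - a)).const_add 1
  have h2 : HasDerivAt (fun x : ℝ => 1 + x) 1 x := by
    simpa using (hasDerivAt_id x).const_add 1
  have hne : (1 + x) ≠ 0 := by positivity
  refine (h1.div h2 hne).congr_deriv ?_
  field_simp
  ring

theorem aux_A (a x : ℝ) : HasDerivAt (fun x : ℝ => 1 + a * x) a x := by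
  simpa using ((hasDerivAt_id x).const_mul a).const_add 1

theorem aux_H (a t : ℝ) (ha0 : 0 < a) (ha1 : a < 1) (hat : a * t = 1 / 2) (ht1 : 1 / 2 < t)
    (ht2 : t < 1) (y : ℝ) (hy : 0 ≤ y) :
    0 ≤ (1 + t) * a * (1 + a * y) ^ t - (1 + t) * (1 - a) * ((1 + (1 - a) * y) / (1 + y)) ^ t
      + t * ((1 + (1 - a) * y) / (1 + y)) ^ (1 + t) - 2 * a := by
  refine aux_mono_s3 (fun y => (1 + t) * a * (1 + a * y) ^ t
      - (1 + t) * (1 - a) * ((1 + (1 - a) * y) / (1 + y)) ^ t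
      + t * ((1 + (1 - a) * y) / (1 + y)) ^ (1 + t) - 2 * a)
    (fun y => t * (1 + t) * a ^ 2 * ((1 + a * y) ^ (t - 1)
      - ((1 + (1 - a) * y) / (1 + y)) ^ (t - 1) / (1 + y) ^ 3)) ?_ ?_ ?_ y hy
  · simp
    linarith
  · intro x hx
    have hb : 0 < 1 - a := by linarith
    have hA : 0 < 1 + a * x := by positivity
    have hu : 0 < (1 + (1 - a) * x) / (1 + x) := by positivity
    have dA := (aux_A a x).rpow_const (p := t) (Or.inl hA.ne')
    have du := (aux_u a x hx).rpow_const (p := t) (Or.inl hu.ne')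
    have du1 := (aux_u a x hx).rpow_const (p := 1 + t) (Or.inl hu.ne')
    refine ((((dA.const_mul ((1 + t) * a)).sub (du.const_mul ((1 + t) * (1 - a)))).add
      (du1.const_mul t)).sub_const (2 * a)).congr_deriv ?_
    have e : ((1 + (1 - a) * x) / (1 + x)) ^ (1 + t - 1)
        = ((1 + (1 - a) * x) / (1 + x)) ^ (t - 1) * ((1 + (1 - a) * x) / (1 + x)) := by
      rw [← Real.rpow_add_one hu.ne']
      congr 1
      ring
    rw [e]
    generalize ((1 + (1 - a) * x) / (1 + x)) ^ (t - 1) = P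
    generalize (1 + a * x) ^ (t - 1) = Q
    field_simp
    ring
  · intro x hx
    have hb : 0 < 1 - a := by linarith
    have hA : 0 < 1 + a * x := by positivity
    have hx1 : 0 < 1 + x := by positivity
    have h1 : (1 + x) ^ (t - 1) ≤ (1 + a * x) ^ (t - 1) :=
      Real.rpow_le_rpow_of_nonpos hA (by nlinarith) (by linarith)
    have h2 : ((1 + (1 - a) * x) / (1 + x)) ^ (t - 1) ≤ ((1 + x)⁻¹) ^ (t - 1) := by
      apply Real.rpow_le_rpow_of_nonpos (by positivity) _ (by linarith)
      rw [inv_eq_one_div]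
      gcongr
      nlinarith
    have h3 : ((1 + x)⁻¹) ^ (t - 1) ≤ (1 + x) ^ (t - 1) * (1 + x) ^ 3 := by
      rw [Real.inv_rpow hx1.le, ← Real.rpow_neg hx1.le, ← Real.rpow_natCast,
        ← Real.rpow_add hx1]
      apply Real.rpow_le_rpow_of_exponent_le (by linarith)
      push_cast
      linarith
    have h4 : ((1 + (1 - a) * x) / (1 + x)) ^ (t - 1) / (1 + x) ^ 3 ≤ (1 + a * x) ^ (t - 1) := by
      rw [div_le_iff₀ (by positivity)]
      exact (h2.trans h3).trans (by gcongr)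
    have : 0 < t := by linarith
    exact mul_nonneg (by positivity) (by linarith)

theorem aux_F (a t : ℝ) (ha0 : 0 < a) (ha1 : a < 1) (hat : a * t = 1 / 2) (ht1 : 1 / 2 < t)
    (ht2 : t < 1) (y : ℝ) (hy : 0 ≤ y) :
    0 ≤ (1 + a * y) ^ (1 + t) - (1 + y) * ((1 + (1 - a) * y) / (1 + y)) ^ (1 + t)
      - 2 * a * y := by
  refine aux_mono_s3 (fun y => (1 + a * y) ^ (1 + t)
      - (1 + y) * ((1 + (1 - a) * y) / (1 + y)) ^ (1 + t) - 2 * a * y) _ ?_ ?_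
    (aux_H a t ha0 ha1 hat ht1 ht2) y hy
  · simp
  · intro x hx
    have hb : 0 < 1 - a := by linarith
    have hA : 0 < 1 + a * x := by positivity
    have hu : 0 < (1 + (1 - a) * x) / (1 + x) := by positivity
    have dA := (aux_A a x).rpow_const (p := 1 + t) (Or.inl hA.ne')
    have du1 := (aux_u a x hx).rpow_const (p := 1 + t) (Or.inl hu.ne')
    have h2 : HasDerivAt (fun x : ℝ => 1 + x) 1 x := by
      simpa using (hasDerivAt_id x).const_add 1
    have h3 : HasDerivAt (fun x : ℝ => 2 * a * x) (2 * a) x := by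
      simpa using (hasDerivAt_id x).const_mul (2 * a)
    refine ((dA.sub (h2.mul du1)).sub h3).congr_deriv ?_
    have e : ((1 + (1 - a) * x) / (1 + x)) ^ (1 + t)
        = ((1 + (1 - a) * x) / (1 + x)) ^ t * ((1 + (1 - a) * x) / (1 + x)) := by
      rw [← Real.rpow_add_one hu.ne']
      congr 1
      ring
    rw [e, add_sub_cancel_left]
    generalize ((1 + (1 - a) * x) / (1 + x)) ^ t = P
    generalize (1 + a * x) ^ t = Q
    field_simp
    ring

/-- Lemma 2.1: for `0 ≤ y ≤ 1` and `1/2 < t < 1`,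
`(1 + y/(2t))^{1+t} - (1+y)^{-t} (1 + (2t-1)y/(2t))^{1+t} - y/t ≥ 0`. -/
theorem stmt_3 (y t : ℝ) (hy0 : 0 ≤ y) (hy1 : y ≤ 1) (ht1 : 1 / 2 < t) (ht2 : t < 1) :
    0 ≤ (1 + y / (2 * t)) ^ (1 + t) -
      (1 + y) ^ (-t) * (1 + (2 * t - 1) * y / (2 * t)) ^ (1 + t) - y / t := by
  have ht : 0 < t := by linarith
  have ha1 : 1 / (2 * t) < 1 := by
    rw [div_lt_one (by positivity)]
    linarith
  have key := aux_F (1 / (2 * t)) t (by positivity) ha1 (by field_simp) ht1 ht2 y hy0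
  have e1 : 1 + 1 / (2 * t) * y = 1 + y / (2 * t) := by ring
  have e2 : 1 + (1 - 1 / (2 * t)) * y = 1 + (2 * t - 1) * y / (2 * t) := by
    field_simp
  have e3 : 2 * (1 / (2 * t)) * y = y / t := by field_simp
  have hy : 0 < 1 + y := by linarith
  have hB : 0 ≤ 1 + (2 * t - 1) * y / (2 * t) := by
    have : 0 < 2 * t - 1 := by linarith
    positivity
  rw [e1, e2, e3, Real.div_rpow hB hy.le] at key
  have e4 : (1 + y) * ((1 + (2 * t - 1) * y / (2 * t)) ^ (1 + t) / (1 + y) ^ (1 + t))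
      = (1 + y) ^ (-t) * (1 + (2 * t - 1) * y / (2 * t)) ^ (1 + t) := by
    have hp : 0 < (1 + y) ^ t := Real.rpow_pos_of_pos hy t
    rw [Real.rpow_neg hy.le, Real.rpow_add hy 1 t, Real.rpow_one]
    field_simp
  rwa [e4] at key
end

section
/- For all real numbers x and t with 0 ≤ x ≤ 1 and 1/2 < t < 1, one has (1+2tx)^{−t−2}·(1+(2t−1)x)^{t−1}·(1+x)^{1−t} ≤ 1. -/
/-- For `0 ≤ x ≤ 1` and `1/2 < t < 1`,
`(1+2tx)^{-t-2} (1+(2t-1)x)^{t-1} (1+x)^{1-t} ≤ 1`. -/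
theorem stmt_4 (x t : ℝ) (hx0 : 0 ≤ x) (hx1 : x ≤ 1) (ht1 : 1 / 2 < t) (ht2 : t < 1) :
    (1 + 2 * t * x) ^ (-t - 2) * (1 + (2 * t - 1) * x) ^ (t - 1) * (1 + x) ^ (1 - t) ≤ 1 := by
  have hA : 1 + x ≤ 1 + 2 * t * x := by nlinarith
  have hB : 1 ≤ 1 + (2 * t - 1) * x := by nlinarith
  have h1 : (1 + 2 * t * x) ^ (-t - 2) ≤ (1 + x) ^ (-t - 2) :=
    Real.rpow_le_rpow_of_nonpos (by linarith) hA (by linarith)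
  have h2 : (1 + (2 * t - 1) * x) ^ (t - 1) ≤ 1 :=
    Real.rpow_le_one_of_one_le_of_nonpos hB (by linarith)
  have h3 : (1 + x) ^ (-t - 2) * (1 + x) ^ (1 - t) ≤ 1 := by
    rw [← Real.rpow_add (by linarith)]
    exact Real.rpow_le_one_of_one_le_of_nonpos (by linarith) (by linarith)
  have p1 : 0 ≤ (1 + x) ^ (-t - 2) := Real.rpow_nonneg (by linarith) _
  have p2 : 0 ≤ (1 + (2 * t - 1) * x) ^ (t - 1) := Real.rpow_nonneg (by linarith) _
  have p3 : 0 ≤ (1 + x) ^ (1 - t) := Real.rpow_nonneg (by linarith) _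
  calc _ ≤ (1 + x) ^ (-t - 2) * 1 * (1 + x) ^ (1 - t) :=
        mul_le_mul_of_nonneg_right (mul_le_mul h1 h2 p2 p1) p3
    _ ≤ 1 := by rw [mul_one]; exact h3
end

section
/- Let p be a real number with p ≠ 0 and p < 1, and let q be defined by 1/p + 1/q = 1. Let (λ_i)_{i≥1} and (a_i)_{i≥1} be sequences of positive reals and set S_n = ∑_{i=1}^n λ_i a_i. Let (μ_i)_{i≥1} and (η_i)_{i≥1} be sequences of positive reals such that μ_i < η_i for all i when 0 < p < 1, and μ_i ≥ η_i for all i when p < 0. Then for every n ≥ 2, ∑_{i=2}^{n−1} ( μ_i − (μ_{i+1}^q − η_{i+1}^q)^{1/q} )·S_i^{1/p} + μ_n·S_n^{1/p} ≤ (μ_2^q − η_2^q)^{1/q}·λ_1^{1/p}·a_1^{1/p} + ∑_{i=2}^n η_i·λ_i^{1/p}·a_i^{1/p}. -/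
theorem aux_conv_s5 {R X Y U V : ℝ} (hR : 1 ≤ R) (hX : 0 < X) (hY : 0 < Y) (hU : 0 ≤ U)
    (hV : 0 ≤ V) :
    (U + V) ^ R * (X + Y) ^ (1 - R) ≤ U ^ R * X ^ (1 - R) + V ^ R * Y ^ (1 - R) := by
  have key : ∀ {W Z : ℝ}, 0 ≤ W → 0 < Z → W ^ R * Z ^ (1 - R) = Z * (W / Z) ^ R := by
    intro W Z hW hZ
    rw [Real.div_rpow hW hZ.le, Real.rpow_sub hZ, Real.rpow_one]
    ring
  have hXY : 0 < X + Y := by positivity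
  rw [key hU hX, key hV hY, key (by positivity) hXY]
  have h := (convexOn_rpow hR).2
    (Set.mem_Ici.2 (by positivity : 0 ≤ U / X)) (Set.mem_Ici.2 (by positivity : 0 ≤ V / Y))
    (by positivity : 0 ≤ X / (X + Y)) (by positivity : 0 ≤ Y / (X + Y)) (by field_simp)
  simp only [smul_eq_mul] at h
  have e : X / (X + Y) * (U / X) + Y / (X + Y) * (V / Y) = (U + V) / (X + Y) := by
    field_simp
  rw [e] at h
  calc _ ≤ (X + Y) * (X / (X + Y) * (U / X) ^ R + Y / (X + Y) * (V / Y) ^ R) := by gcongr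
    _ = _ := by
      generalize (U / X) ^ R = s
      generalize (V / Y) ^ R = t
      field_simp

theorem aux_step_s5 {p q x y m e : ℝ} (hp0 : p ≠ 0) (hp1 : p < 1) (hq : 1 / p + 1 / q = 1)
    (hx : 0 < x) (hy : 0 < y) (hm : 0 < m) (he : 0 < e)
    (h1 : 0 < p → m < e) (h2 : p < 0 → e ≤ m) :
    m * (x + y) ^ (1 / p) ≤ (m ^ q - e ^ q) ^ (1 / q) * x ^ (1 / p) + e * y ^ (1 / p) := by
  have hq0 : q ≠ 0 := by
    rintro rfl
    simp at hq
    linarith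
  have hs : 1 / q = 1 - 1 / p := by linarith
  have back : ∀ {z : ℝ}, 0 < z → z = (z ^ q) ^ (1 / q) := by
    intro z hz
    rw [← Real.rpow_mul hz.le, mul_one_div_cancel hq0, Real.rpow_one]
  have hm' := back hm
  have he' := back he
  have hB : 0 < e ^ q := by positivity
  have hsum : m ^ q - e ^ q + e ^ q = m ^ q := by ring
  rcases lt_or_gt_of_ne hp0 with hp | hp
  · have hr : 1 / p < 0 := one_div_neg.2 hp
    have hqpos : 0 < q := by
      have : 0 < 1 / q := by linarith
      exact one_div_pos.1 this
    have hA : 0 ≤ m ^ q - e ^ q := sub_nonneg.2 (Real.rpow_le_rpow he.le (h2 hp) hqpos.le)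
    have h := aux_conv_s5 (R := 1 / q) (by linarith) hx hy hA hB.le
    rw [hsum, ← hm', ← he', show 1 - 1 / q = 1 / p by linarith] at h
    exact h
  · have hr : 1 < 1 / p := by rwa [lt_div_iff₀ hp, one_mul]
    have hqneg : q < 0 := by
      have : 1 / q < 0 := by linarith
      exact one_div_neg.1 this
    have hA : 0 < m ^ q - e ^ q := sub_pos.2 (Real.rpow_lt_rpow_of_neg hm (h1 hp) hqneg)
    have h := aux_conv_s5 (R := 1 / p) hr.le hA hB hx.le hy.le
    rw [hsum, ← hs, ← hm', ← he'] at h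
    linarith

/-- Lemma 2.4 of [G]: for `p ≠ 0`, `p < 1`, `1/p + 1/q = 1`, positive sequences
`λ, a, μ, η` with `μ_i < η_i` when `0 < p < 1` and `μ_i ≥ η_i` when `p < 0`,
and `S_n = ∑_{i=1}^n λ_i a_i`, for every `n ≥ 2`:
`∑_{i=2}^{n-1} (μ_i - (μ_{i+1}^q - η_{i+1}^q)^{1/q}) S_i^{1/p} + μ_n S_n^{1/p}
  ≤ (μ_2^q - η_2^q)^{1/q} λ_1^{1/p} a_1^{1/p} + ∑_{i=2}^n η_i λ_i^{1/p} a_i^{1/p}`. -/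
theorem stmt_5 (p q : ℝ) (hp0 : p ≠ 0) (hp1 : p < 1) (hq : 1 / p + 1 / q = 1)
    (lam a μ η : ℕ → ℝ)
    (hlam : ∀ i, 1 ≤ i → 0 < lam i) (ha : ∀ i, 1 ≤ i → 0 < a i)
    (hμ : ∀ i, 1 ≤ i → 0 < μ i) (hη : ∀ i, 1 ≤ i → 0 < η i)
    (hcase1 : 0 < p → ∀ i, 1 ≤ i → μ i < η i)
    (hcase2 : p < 0 → ∀ i, 1 ≤ i → η i ≤ μ i)
    (S : ℕ → ℝ) (hS : ∀ n, S n = ∑ i ∈ Finset.Icc 1 n, lam i * a i)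
    (n : ℕ) (hn : 2 ≤ n) :
    (∑ i ∈ Finset.Icc 2 (n - 1),
        (μ i - (μ (i + 1) ^ q - η (i + 1) ^ q) ^ (1 / q)) * S i ^ (1 / p)) +
      μ n * S n ^ (1 / p) ≤
    (μ 2 ^ q - η 2 ^ q) ^ (1 / q) * lam 1 ^ (1 / p) * a 1 ^ (1 / p) +
      ∑ i ∈ Finset.Icc 2 n, η i * lam i ^ (1 / p) * a i ^ (1 / p) := by
  have hS1 : ∀ k, S (k + 1) = S k + lam (k + 1) * a (k + 1) := by
    intro k
    rw [hS, hS, Finset.sum_Icc_succ_top (by omega)]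
  have hS0 : S 1 = lam 1 * a 1 := by rw [hS]; simp
  have hpos : ∀ k, 1 ≤ k → 0 < S k := by
    intro k hk
    rw [hS]
    refine Finset.sum_pos (fun i hi => ?_) ⟨1, by simp [hk]⟩
    have := (Finset.mem_Icc.1 hi).1
    exact mul_pos (hlam i this) (ha i this)
  have hstep : ∀ k, 1 ≤ k → μ (k + 1) * S (k + 1) ^ (1 / p) ≤
      (μ (k + 1) ^ q - η (k + 1) ^ q) ^ (1 / q) * S k ^ (1 / p)
        + η (k + 1) * lam (k + 1) ^ (1 / p) * a (k + 1) ^ (1 / p) := by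
    intro k hk
    have hl := hlam (k + 1) (by omega)
    have hak := ha (k + 1) (by omega)
    have h := aux_step_s5 hp0 hp1 hq (hpos k hk) (mul_pos hl hak)
      (hμ (k + 1) (by omega)) (hη (k + 1) (by omega))
      (fun h => hcase1 h _ (by omega)) (fun h => hcase2 h _ (by omega))
    rw [hS1]
    rwa [Real.mul_rpow hl.le hak.le, ← mul_assoc (η (k + 1))] at h
  induction n, hn using Nat.le_induction with
  | base =>
    have h := hstep 1 le_rfl
    rw [hS0, Real.mul_rpow (hlam 1 le_rfl).le (ha 1 le_rfl).le, ← mul_assoc] at h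
    simpa using h
  | succ k hk ih =>
    have h := hstep k (by omega)
    obtain ⟨j, rfl⟩ : ∃ j, k = j + 1 := ⟨k - 1, by omega⟩
    rw [Finset.sum_Icc_succ_top (by omega : 2 ≤ j + 1 + 1)]
    simp only [Nat.add_sub_cancel] at ih ⊢
    rw [Finset.sum_Icc_succ_top (by omega : 2 ≤ j + 1)]
    linarith
end

section
/- Let p < 0 be a real number, let N ≥ 1 be an integer, let λ_1, …, λ_{N+1} and a_1, …, a_N be positive reals, and set S_i = ∑_{k=1}^i λ_k a_k. Let ν_1 = 0 and let ν_2, …, ν_{N+1} be arbitrary nonnegative reals. Then ∑_{i=1}^{N} ( (1+ν_i)^{1−p}/λ_i^p − ν_{i+1}^{1−p}/λ_{i+1}^p )·S_i^p ≤ ∑_{i=1}^N a_i^p. -/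
theorem radon_aux (p : ℝ) (hp : p < 0) (n u v : ℝ) (hn : 0 ≤ n) (hu : 0 < u) (hv : 0 < v) :
    (1 + n) ^ (1 - p) * (v + u) ^ p ≤ u ^ p + n ^ (1 - p) * v ^ p := by
  have hs : 0 < v + u := by positivity
  have key : ∀ x s : ℝ, 0 ≤ x → 0 < s → s * (x / s) ^ (1 - p) = x ^ (1 - p) * s ^ p := by
    intro x s hx hs
    rw [Real.div_rpow hx hs.le, Real.rpow_sub hs, Real.rpow_one]
    have := (Real.rpow_pos_of_pos hs p).ne'
    field_simp
  have h := (convexOn_rpow (p := 1 - p) (by linarith)).2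
    (show (1 / u) ∈ Set.Ici (0:ℝ) from by simp [hu.le])
    (show (n / v) ∈ Set.Ici (0:ℝ) from by simp only [Set.mem_Ici]; positivity)
    (show 0 ≤ u / (v + u) by positivity) (show 0 ≤ v / (v + u) by positivity)
    (by field_simp; ring)
  simp only [smul_eq_mul] at h
  have e : u / (v + u) * (1 / u) + v / (v + u) * (n / v) = (1 + n) / (v + u) := by
    field_simp
  rw [e] at h
  have h2 := mul_le_mul_of_nonneg_left h hs.le
  rw [key _ _ (by positivity) hs] at h2
  have k1 := key 1 u (by norm_num) hu
  have k2 := key n v hn hv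
  rw [Real.one_rpow, one_mul] at k1
  rw [← k1, ← k2]
  refine h2.trans (le_of_eq ?_)
  field_simp

/-- Inequality (3.2): for `p < 0`, `N ≥ 1`, positive `λ_1, …, λ_{N+1}`,
positive `a_1, …, a_N`, `S_i = ∑_{k=1}^i λ_k a_k`, `ν_1 = 0` and
nonnegative `ν_2, …, ν_{N+1}`:
`∑_{i=1}^N ((1+ν_i)^{1-p}/λ_i^p - ν_{i+1}^{1-p}/λ_{i+1}^p) S_i^p ≤ ∑_{i=1}^N a_i^p`. -/
theorem stmt_6 (p : ℝ) (hp : p < 0) (N : ℕ) (hN : 1 ≤ N)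
    (lam a ν : ℕ → ℝ)
    (hlam : ∀ i, 1 ≤ i → i ≤ N + 1 → 0 < lam i)
    (ha : ∀ i, 1 ≤ i → i ≤ N → 0 < a i)
    (hν1 : ν 1 = 0)
    (hν : ∀ i, 2 ≤ i → i ≤ N + 1 → 0 ≤ ν i)
    (S : ℕ → ℝ) (hS : ∀ i, S i = ∑ k ∈ Finset.Icc 1 i, lam k * a k) :
    ∑ i ∈ Finset.Icc 1 N,
        ((1 + ν i) ^ (1 - p) / lam i ^ p - ν (i + 1) ^ (1 - p) / lam (i + 1) ^ p) * S i ^ p ≤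
      ∑ i ∈ Finset.Icc 1 N, a i ^ p := by
  have hSpos : ∀ i, 1 ≤ i → i ≤ N → 0 < S i := by
    intro i h1 h2
    rw [hS]
    apply Finset.sum_pos
    · intro k hk
      rw [Finset.mem_Icc] at hk
      exact mul_pos (hlam k hk.1 (by omega)) (ha k hk.1 (by omega))
    · exact ⟨1, by simp [h1]⟩
  have hz : (0:ℝ) ^ (1 - p) = 0 := Real.zero_rpow (by linarith)
  have main : ∀ n, n ≤ N → ∑ i ∈ Finset.Icc 1 n,
        ((1 + ν i) ^ (1 - p) / lam i ^ p - ν (i + 1) ^ (1 - p) / lam (i + 1) ^ p) * S i ^ p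
        + ν (n + 1) ^ (1 - p) / lam (n + 1) ^ p * S n ^ p ≤
      ∑ i ∈ Finset.Icc 1 n, a i ^ p := by
    intro n
    induction n with
    | zero => intro _; simp [hν1, hz]
    | succ n ih =>
      intro hn
      have ih := ih (by omega)
      rw [Finset.sum_Icc_succ_top (by omega), Finset.sum_Icc_succ_top (by omega)]
      have hl := hlam (n+1) (by omega) (by omega)
      have hA := ha (n+1) (by omega) hn
      have hSs : S (n+1) = S n + lam (n+1) * a (n+1) := by
        rw [hS, hS, Finset.sum_Icc_succ_top (by omega)]
      have hlp := Real.rpow_pos_of_pos hl p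
      have step : (1 + ν (n+1)) ^ (1 - p) * S (n+1) ^ p ≤
          lam (n+1) ^ p * a (n+1) ^ p + ν (n+1) ^ (1 - p) * S n ^ p := by
        rw [← Real.mul_rpow hl.le hA.le, hSs]
        rcases Nat.eq_zero_or_pos n with h0 | h0
        · subst h0
          have : S 0 = 0 := by simp [hS]
          simp [hν1, hz, this]
        · exact radon_aux p hp _ _ _ (hν _ (by omega) (by omega)) (mul_pos hl hA)
            (hSpos n h0 (by omega))
      have step2 : (1 + ν (n+1)) ^ (1 - p) / lam (n+1) ^ p * S (n+1) ^ p ≤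
          a (n+1) ^ p + ν (n+1) ^ (1 - p) / lam (n+1) ^ p * S n ^ p := by
        have := div_le_div_of_nonneg_right step hlp.le
        refine le_trans (le_of_eq ?_) (this.trans (le_of_eq ?_))
        · ring
        · field_simp
      linarith
  have h := main N le_rfl
  have h1 : 0 ≤ ν (N + 1) ^ (1 - p) / lam (N + 1) ^ p * S N ^ p := by
    have := hν (N+1) (by omega) le_rfl
    have := hlam (N+1) (by omega) le_rfl
    have := hSpos N hN le_rfl
    positivity
  linarith
end

section
/- Let 0 < p < 1 and let α be a real number with α < 1/p. Let f : (0,∞) → [0,∞) be measurable, and suppose that F(x) := ∫_x^∞ f(t)·t^{α−1} dt is finite and strictly positive for every x > 0, and that ∫_0^∞ (F(x)/x^α)^p dx and ∫_0^∞ (F(x)/x^α)^{p−1} f(x) dx are both finite. Then ∫_0^∞ ( x^{−α}·∫_x^∞ f(t)·t^{α−1} dt )^p dx = (p/(1−αp)) · ∫_0^∞ ( x^{−α}·∫_x^∞ f(t)·t^{α−1} dt )^{p−1} · f(x) dx. -/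
open MeasureTheory

lemma ac_comp {g f : ℝ → ℝ} {a b : ℝ} {S : Set ℝ} {K : NNReal} (hg : LipschitzOnWith K g S)
    (hf : AbsolutelyContinuousOnInterval f a b) (hS : ∀ x ∈ Set.uIcc a b, f x ∈ S) :
    AbsolutelyContinuousOnInterval (fun x => g (f x)) a b := by
  rw [absolutelyContinuousOnInterval_iff] at hf ⊢
  intro ε hε
  obtain ⟨δ, hδ, h⟩ := hf (ε / (K + 1)) (by positivity)
  refine ⟨δ, hδ, fun E hE hE2 => ?_⟩
  have h1 := h E hE hE2
  calc _ ≤ ∑ i ∈ Finset.range E.1, (K : ℝ) * dist (f (E.2 i).1) (f (E.2 i).2) := by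
        apply Finset.sum_le_sum
        intro i hi
        exact hg.dist_le_mul _ (hS _ (hE.1 i hi).1) _ (hS _ (hE.1 i hi).2)
    _ = K * ∑ i ∈ Finset.range E.1, dist (f (E.2 i).1) (f (E.2 i).2) := by
        rw [Finset.mul_sum]
    _ ≤ K * (ε / (K + 1)) := by gcongr
    _ < (K + 1) * (ε / (K + 1)) := by gcongr; linarith
    _ = ε := by field_simp

set_option maxHeartbeats 2000000 in
lemma ftc_aux (p α a b : ℝ) (ha : 0 < a) (hab : a ≤ b) (h F : ℝ → ℝ)
    (hh : IntervalIntegrable h volume a b)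
    (hF : ∀ x ∈ Set.Icc a b, F x = F a - ∫ t in a..x, h t)
    (hpos : ∀ x ∈ Set.Icc a b, 0 < F x) :
    ∫ x in a..b, ((1 - α * p) * x ^ (-α * p) * F x ^ p
      - x ^ (1 - α * p) * (p * F x ^ (p - 1) * h x))
      = b ^ (1 - α * p) * F b ^ p - a ^ (1 - α * p) * F a ^ p := by
  set Φ : ℝ → ℝ := fun x => F a - ∫ t in a..x, h t with hΦ
  have hacI := hh.absolutelyContinuousOnInterval_intervalIntegral (c := a) (by simp)
  have hcst : AbsolutelyContinuousOnInterval (fun _ : ℝ => F a) a b :=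
    (contDiffOn_const).absolutelyContinuousOnInterval
  have hacΦ : AbsolutelyContinuousOnInterval Φ a b := hcst.fun_sub hacI
  have huIcc : Set.uIcc a b = Set.Icc a b := Set.uIcc_of_le hab
  have hcont := hacΦ.continuousOn
  rw [huIcc] at hcont
  obtain ⟨x0, hx0, hmin⟩ := isCompact_Icc.exists_isMinOn (Set.nonempty_Icc.2 hab) hcont
  obtain ⟨x1, hx1, hmax⟩ := isCompact_Icc.exists_isMaxOn (Set.nonempty_Icc.2 hab) hcont
  have hp0 : 0 < Φ x0 := by have := hpos x0 hx0; rwa [hF x0 hx0] at this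
  obtain ⟨K, hK⟩ := ContDiffOn.exists_lipschitzOnWith (f := fun y : ℝ => y ^ p) (n := 1)
    (s := Set.Icc (Φ x0) (Φ x1))
    (fun y hy => (Real.contDiffAt_rpow_const_of_ne (by linarith [hy.1])).contDiffWithinAt)
    one_ne_zero (convex_Icc _ _) isCompact_Icc
  have hac1 : AbsolutelyContinuousOnInterval (fun x => (Φ x) ^ p) a b :=
    ac_comp hK hacΦ (fun x hx => by
      rw [huIcc] at hx
      exact ⟨hmin hx, hmax hx⟩)
  have hac2 : AbsolutelyContinuousOnInterval (fun x : ℝ => x ^ (1 - α * p)) a b := by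
    apply ContDiffOn.absolutelyContinuousOnInterval
    intro y hy
    rw [huIcc] at hy
    exact (Real.contDiffAt_rpow_const_of_ne (by linarith [hy.1])).contDiffWithinAt
  have key := (hac2.fun_mul hac1).integral_deriv_eq_sub
  have e1 : Φ a = F a := by simp [hΦ]
  have e2 : Φ b = F b := (hF b ⟨hab, le_rfl⟩).symm
  rw [e1, e2] at key
  rw [← key]
  apply intervalIntegral.integral_congr_ae
  filter_upwards [hh.ae_hasDerivAt_integral] with x hx hxm
  have hxm' := Set.uIoc_subset_uIcc hxm
  have d1 : HasDerivAt Φ (- h x) x := by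
    have := (hx hxm' a (by simp)).const_sub (F a)
    exact this
  rw [huIcc] at hxm'
  have hxp : 0 < x := by linarith [hxm'.1]
  have hFx : Φ x = F x := (hF x hxm').symm
  have d2 := d1.rpow_const (p := p) (Or.inl (by rw [hFx]; exact (hpos x hxm').ne'))
  have d3 := Real.hasDerivAt_rpow_const (x := x) (p := 1 - α * p) (Or.inl hxp.ne')
  have d4 := d3.fun_mul d2
  rw [d4.deriv, hFx, show 1 - α * p - 1 = -α * p by ring]
  ring

/-- Identity (4.1)/(20): for `0 < p < 1`, `α < 1/p` and suitable `f ≥ 0` on `(0,∞)`: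
`∫_0^∞ (x^{-α} ∫_x^∞ f(t) t^{α-1} dt)^p dx
  = (p/(1-αp)) ∫_0^∞ (x^{-α} ∫_x^∞ f(t) t^{α-1} dt)^{p-1} f(x) dx`. -/
theorem stmt_7 (p α : ℝ) (hp0 : 0 < p) (hp1 : p < 1) (hα : α < 1 / p)
    (f : ℝ → ℝ) (hf : Measurable f) (hf0 : ∀ x ∈ Set.Ioi (0 : ℝ), 0 ≤ f x)
    (hFint : ∀ x ∈ Set.Ioi (0 : ℝ),
      IntegrableOn (fun t => f t * t ^ (α - 1)) (Set.Ioi x))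
    (hFpos : ∀ x ∈ Set.Ioi (0 : ℝ), 0 < ∫ t in Set.Ioi x, f t * t ^ (α - 1))
    (hI1 : IntegrableOn
      (fun x => (x ^ (-α) * ∫ t in Set.Ioi x, f t * t ^ (α - 1)) ^ p) (Set.Ioi 0))
    (hI2 : IntegrableOn
      (fun x => (x ^ (-α) * ∫ t in Set.Ioi x, f t * t ^ (α - 1)) ^ (p - 1) * f x)
      (Set.Ioi 0)) :
    ∫ x in Set.Ioi (0 : ℝ), (x ^ (-α) * ∫ t in Set.Ioi x, f t * t ^ (α - 1)) ^ p =
      (p / (1 - α * p)) *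
        ∫ x in Set.Ioi (0 : ℝ),
          (x ^ (-α) * ∫ t in Set.Ioi x, f t * t ^ (α - 1)) ^ (p - 1) * f x := by
  have hc : 0 < 1 - α * p := by
    have := (lt_div_iff₀ hp0).1 hα
    linarith
  set h : ℝ → ℝ := fun t => f t * t ^ (α - 1) with hh
  set F : ℝ → ℝ := fun x => ∫ t in Set.Ioi x, h t with hFdef
  set A : ℝ → ℝ := fun x => (x ^ (-α) * F x) ^ p with hA
  set B : ℝ → ℝ := fun x => (x ^ (-α) * F x) ^ (p - 1) * f x with hB
  change ∫ x in Set.Ioi (0 : ℝ), A x = (p / (1 - α * p)) * ∫ x in Set.Ioi (0 : ℝ), B x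
  have hFp : ∀ x, 0 < x → 0 < F x := fun x hx => hFpos x hx
  set G : ℝ → ℝ := fun x => x ^ (1 - α * p) * F x ^ p with hG
  set H : ℝ → ℝ := fun x => (1 - α * p) * A x - p * B x with hH
  have hAG : ∀ x, 0 < x → A x = G x * x⁻¹ := by
    intro x hx
    simp only [hA, hG]
    rw [Real.mul_rpow (by positivity) (hFp x hx).le, ← Real.rpow_mul hx.le,
      show 1 - α * p = -α * p + 1 by ring, Real.rpow_add hx, Real.rpow_one]
    field_simp
  have hGpos : ∀ x, 0 < x → 0 < G x := fun x hx => by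
    have := hFp x hx
    simp only [hG]; positivity
  have ftc : ∀ a b, 0 < a → a ≤ b → ∫ x in a..b, H x = G b - G a := by
    intro a b ha hab
    have hint : IntervalIntegrable h volume a b :=
      (intervalIntegrable_iff_integrableOn_Ioc_of_le hab).2
        ((hFint a ha).mono_set Set.Ioc_subset_Ioi_self)
    rw [← ftc_aux p α a b ha hab h F hint ?_ (fun x hx => hFp x (ha.trans_le hx.1))]
    · apply intervalIntegral.integral_congr
      intro x hx
      rw [Set.uIcc_of_le hab] at hx
      have hxp : 0 < x := ha.trans_le hx.1
      simp only [hH, hA, hB, hh]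
      rw [Real.mul_rpow (by positivity) (hFp x hxp).le,
        Real.mul_rpow (by positivity) (hFp x hxp).le, ← Real.rpow_mul hxp.le,
        ← Real.rpow_mul hxp.le, show -α * (p - 1) = (1 - α * p) + (α - 1) by ring,
        Real.rpow_add hxp]
      ring
    · intro x hx
      have := intervalIntegral.integral_interval_add_Ioi (hFint a ha)
        (hFint x (ha.trans_le hx.1))
      simp only [hFdef]
      linarith
  have hHint : IntegrableOn H (Set.Ioi 0) := (hI1.const_mul _).sub (hI2.const_mul _)
  -- limit at infinity
  have hH1 : IntegrableOn H (Set.Ioi 1) := hHint.mono_set (Set.Ioi_subset_Ioi zero_le_one)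
  have hH01 : IntegrableOn H (Set.Ioc 0 1) := hHint.mono_set Set.Ioc_subset_Ioi_self
  have L1 := intervalIntegral_tendsto_integral_Ioi 1 hH1 Filter.tendsto_id
  have T1 : Filter.Tendsto G Filter.atTop (nhds (G 1 + ∫ x in Set.Ioi 1, H x)) := by
    refine (L1.const_add (G 1)).congr' ?_
    filter_upwards [Filter.eventually_ge_atTop 1] with b hb
    rw [id, ftc 1 b one_pos hb]; ring
  have T0 : Filter.Tendsto G (nhdsWithin 0 (Set.Ioi 0))
      (nhds (G 1 - ∫ x in (0:ℝ)..1, H x)) := by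
    have hcts := intervalIntegral.continuousOn_primitive_interval_left (f := H) (μ := volume)
      (a := 0) (b := 1) (by
        rw [Set.uIcc_of_le zero_le_one]
        exact (integrableOn_Icc_iff_integrableOn_Ioc (by simp)).2 hH01)
    have h0 := hcts 0 (by simp)
    have h1 : Filter.Tendsto (fun x => ∫ t in x..1, H t) (nhdsWithin 0 (Set.Ioi 0))
      (nhds (∫ x in (0:ℝ)..1, H x)) := by
      refine h0.mono_left ?_
      rw [Set.uIcc_of_le zero_le_one]
      exact nhdsWithin_le_of_mem (Icc_mem_nhdsGT one_pos)
    refine (h1.const_sub (G 1)).congr' ?_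
    filter_upwards [Ioo_mem_nhdsGT (zero_lt_one' ℝ)] with a ha
    rw [ftc a 1 ha.1 ha.2.le]; ring
  have Z1 : G 1 + ∫ x in Set.Ioi 1, H x = 0 := by
    set L := G 1 + ∫ x in Set.Ioi 1, H x
    have hL : 0 ≤ L := ge_of_tendsto T1 (by
      filter_upwards [Filter.eventually_gt_atTop 0] with x hx using (hGpos x hx).le)
    by_contra hne
    have hLp : 0 < L := lt_of_le_of_ne hL (Ne.symm hne)
    obtain ⟨c, hc1⟩ := Filter.eventually_atTop.1 (T1.eventually (lt_mem_nhds (half_lt_self hLp)))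
    apply not_integrableOn_Ioi_inv (a := max c 1)
    have : IntegrableOn (fun x => (2 / L) * A x) (Set.Ioi (max c 1)) :=
      (hI1.mono_set (Set.Ioi_subset_Ioi (by positivity))).const_mul _
    refine Integrable.mono' this (by fun_prop) ?_
    filter_upwards [ae_restrict_mem measurableSet_Ioi] with x hx
    have hx' : max c 1 < x := hx
    have hxc := (le_max_left c 1).trans hx'.le
    have hxp : 0 < x := by linarith [le_max_right c 1]
    rw [hAG x hxp, Real.norm_of_nonneg (by positivity), ← mul_assoc]
    have := hc1 x hxc
    apply le_mul_of_one_le_left (by positivity)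
    rw [div_mul_eq_mul_div, le_div_iff₀ hLp]
    linarith
  have Z0 : G 1 - ∫ x in (0:ℝ)..1, H x = 0 := by
    set L := G 1 - ∫ x in (0:ℝ)..1, H x
    have hL : 0 ≤ L := ge_of_tendsto T0 (by
      filter_upwards [self_mem_nhdsWithin] with x hx using (hGpos x hx).le)
    by_contra hne
    have hLp : 0 < L := lt_of_le_of_ne hL (Ne.symm hne)
    obtain ⟨c, hc0, hc1⟩ := mem_nhdsGT_iff_exists_Ioc_subset.1
      (T0.eventually (lt_mem_nhds (half_lt_self hLp)))
    have hc0' : (0:ℝ) < c := hc0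
    have hcon : IntervalIntegrable (fun x : ℝ => x⁻¹) volume 0 c := by
      rw [intervalIntegrable_iff_integrableOn_Ioc_of_le hc0'.le]
      have : IntegrableOn (fun x => (2 / L) * A x) (Set.Ioc 0 c) :=
        (hI1.mono_set Set.Ioc_subset_Ioi_self).const_mul _
      refine Integrable.mono' this (by fun_prop) ?_
      filter_upwards [ae_restrict_mem measurableSet_Ioc] with x hx
      have hxp : 0 < x := hx.1
      rw [hAG x hxp, Real.norm_of_nonneg (by positivity), ← mul_assoc]
      have : L / 2 < G x := hc1 hx
      apply le_mul_of_one_le_left (by positivity)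
      rw [div_mul_eq_mul_div, le_div_iff₀ hLp]
      linarith
    rw [intervalIntegrable_inv_iff] at hcon
    rcases hcon with h | h
    · exact hc0'.ne h
    · exact h (by simp)
  have tot : ∫ x in Set.Ioi 0, H x = 0 := by
    have := intervalIntegral.integral_interval_add_Ioi hHint hH1
    linarith
  have e : ∫ x in Set.Ioi 0, H x =
      (1 - α * p) * (∫ x in Set.Ioi 0, A x) - p * ∫ x in Set.Ioi 0, B x := by
    rw [← integral_const_mul, ← integral_const_mul]
    exact integral_sub (hI1.const_mul _) (hI2.const_mul _)
  rw [e] at tot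
  rw [div_mul_eq_mul_div, eq_div_iff hc.ne']
  linarith
end

section
/- Let 0 < p < 1 and let α be a real number with α < 1/p. Then for every measurable f : (0,∞) → [0,∞), ∫_0^∞ ( x^{−α}·∫_x^∞ f(t)·t^{α−1} dt )^p dx ≥ (p/(1−αp))^p · ∫_0^∞ f(x)^p dx. -/
open MeasureTheory
open scoped ENNReal

lemma aux_Ioi (β x : ℝ) (hβ : 0 < β) (hx : 0 < x) :
    ∫⁻ t in Set.Ioi x, ENNReal.ofReal (t ^ (-β - 1)) = ENNReal.ofReal (x ^ (-β) / β) := by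
  rw [← ofReal_integral_eq_lintegral_ofReal
    (integrableOn_Ioi_rpow_of_lt (by linarith) hx), integral_Ioi_rpow_of_lt (by linarith) hx]
  · congr 1
    rw [show -β - 1 + 1 = -β by ring, neg_div_neg_eq]
  · filter_upwards [ae_restrict_mem measurableSet_Ioi] with t ht
    exact Real.rpow_nonneg (hx.trans ht).le _

lemma aux_Ioo (β t : ℝ) (hβ : 0 < β) (ht : 0 < t) :
    ∫⁻ x in Set.Ioo 0 t, ENNReal.ofReal (x ^ (β - 1)) = ENNReal.ofReal (t ^ β / β) := by
  have hi : IntervalIntegrable (fun x : ℝ => x ^ (β - 1)) volume 0 t :=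
    intervalIntegral.intervalIntegrable_rpow' (by linarith)
  rw [restrict_Ioo_eq_restrict_Ioc, ← ofReal_integral_eq_lintegral_ofReal
    ((intervalIntegrable_iff_integrableOn_Ioc_of_le ht.le).1 hi),
    ← intervalIntegral.integral_of_le ht.le, integral_rpow (Or.inl (by linarith))]
  · congr 1
    rw [show β - 1 + 1 = β by ring, Real.zero_rpow hβ.ne', sub_zero]
  · filter_upwards [ae_restrict_mem measurableSet_Ioc] with x hx
    exact Real.rpow_nonneg hx.1.le _

lemma aux_point (p α β : ℝ) (hp0 : 0 < p) (hp1 : p < 1) (hβ : 0 < β) (hαβ : β = 1 / p - α)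
    (f : ℝ → ℝ) (hf : Measurable f) (x : ℝ) (hx : 0 < x) :
    ENNReal.ofReal (β ^ (1 - p)) * (ENNReal.ofReal (x ^ (β - 1)) *
      ∫⁻ t in Set.Ioi x, ENNReal.ofReal (f t) ^ p * ENNReal.ofReal (t ^ (-β))) ≤
    (ENNReal.ofReal (x ^ (-α)) *
          ∫⁻ t in Set.Ioi x, ENNReal.ofReal (f t * t ^ (α - 1))) ^ p := by
  set A := ∫⁻ t in Set.Ioi x, ENNReal.ofReal (f t * t ^ (α - 1)) with hA
  have hβp : β * p = 1 - α * p := by rw [hαβ]; field_simp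
  have h := ENNReal.lintegral_mul_norm_pow_le (μ := volume.restrict (Set.Ioi x))
    (f := fun t => ENNReal.ofReal (f t * t ^ (α - 1)))
    (g := fun t => ENNReal.ofReal (t ^ (-β - 1))) (by fun_prop) (by fun_prop)
    (p := p) (q := 1 - p) hp0.le (by linarith) (by ring)
  rw [aux_Ioi β x hβ hx, ← hA] at h
  have e : ∫⁻ t in Set.Ioi x, ENNReal.ofReal (f t) ^ p * ENNReal.ofReal (t ^ (-β)) =
      ∫⁻ t in Set.Ioi x, ENNReal.ofReal (f t * t ^ (α - 1)) ^ p *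
        ENNReal.ofReal (t ^ (-β - 1)) ^ (1 - p) := by
    refine setLIntegral_congr_fun measurableSet_Ioi fun t ht => ?_
    have ht0 : 0 < t := hx.trans ht
    rw [ENNReal.ofReal_mul' (by positivity), ENNReal.mul_rpow_of_nonneg _ _ hp0.le, mul_assoc]
    congr 1
    rw [ENNReal.ofReal_rpow_of_pos (by positivity), ENNReal.ofReal_rpow_of_pos (by positivity),
      ← ENNReal.ofReal_mul (by positivity), ← Real.rpow_mul ht0.le, ← Real.rpow_mul ht0.le,
      ← Real.rpow_add ht0]
    congr 2
    linarith
  rw [e]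
  calc _ ≤ ENNReal.ofReal (β ^ (1 - p)) * (ENNReal.ofReal (x ^ (β - 1)) *
        (A ^ p * ENNReal.ofReal (x ^ (-β) / β) ^ (1 - p))) := by gcongr
    _ = A ^ p * ENNReal.ofReal (β ^ (1 - p) * x ^ (β - 1) * (x ^ (-β) / β) ^ (1 - p)) := by
      rw [ENNReal.ofReal_rpow_of_pos (by positivity), ENNReal.ofReal_mul (by positivity),
        ENNReal.ofReal_mul (by positivity)]
      ring
    _ = A ^ p * ENNReal.ofReal (x ^ (-α)) ^ p := by
      rw [ENNReal.ofReal_rpow_of_pos (by positivity)]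
      congr 2
      rw [Real.div_rpow (by positivity) hβ.le, ← Real.rpow_mul hx.le, ← Real.rpow_mul hx.le]
      have : β ^ (1 - p) ≠ 0 := by positivity
      field_simp
      rw [← Real.rpow_add hx]
      congr 1
      linarith
    _ = _ := by rw [ENNReal.mul_rpow_of_nonneg _ _ hp0.le, mul_comm]
    _ ≤ _ := le_rfl

lemma aux_swap (w h : ℝ → ℝ≥0∞) (hw : Measurable w) (hh : Measurable h) :
    ∫⁻ x in Set.Ioi (0 : ℝ), w x * ∫⁻ t in Set.Ioi x, h t =
      ∫⁻ t in Set.Ioi (0 : ℝ), h t * ∫⁻ x in Set.Ioo 0 t, w x := by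
  have hm : Measurable (fun z : ℝ × ℝ =>
      ({z : ℝ × ℝ | 0 < z.1 ∧ z.1 < z.2}).indicator (fun z => w z.1 * h z.2) z) := by
    refine Measurable.indicator (by fun_prop) ?_
    exact (measurableSet_lt measurable_const measurable_fst).inter
      (measurableSet_lt measurable_fst measurable_snd)
  have key := lintegral_lintegral_swap (μ := (volume : Measure ℝ)) (ν := (volume : Measure ℝ))
    (f := fun x t => ({z : ℝ × ℝ | 0 < z.1 ∧ z.1 < z.2}).indicator (fun z => w z.1 * h z.2) (x, t))
    hm.aemeasurable
  convert key using 1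
  · rw [← lintegral_indicator measurableSet_Ioi]
    refine lintegral_congr fun x => ?_
    by_cases hx : 0 < x
    · rw [Set.indicator_of_mem (by exact hx), ← lintegral_const_mul _ hh,
        ← lintegral_indicator measurableSet_Ioi]
      refine lintegral_congr fun t => ?_
      simp [Set.indicator, hx]
    · simp [Set.indicator, hx]
  · rw [← lintegral_indicator measurableSet_Ioi]
    refine lintegral_congr fun t => ?_
    by_cases ht : 0 < t
    · rw [Set.indicator_of_mem (by exact ht), ← lintegral_const_mul _ hw,
        ← lintegral_indicator measurableSet_Ioo]
      refine lintegral_congr fun x => ?_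
      simp [Set.indicator, mul_comm]
    · rw [Set.indicator_of_notMem (by exact ht)]
      symm
      rw [← lintegral_zero (μ := (volume : Measure ℝ))]
      refine lintegral_congr fun x => ?_
      refine Set.indicator_of_notMem ?_ _
      rintro ⟨h1, h2⟩
      exact ht (lt_trans h1 h2)



/-- For `0 < p < 1`, `α < 1/p` and measurable `f ≥ 0` on `(0,∞)`:
`∫_0^∞ (x^{-α} ∫_x^∞ f(t) t^{α-1} dt)^p dx ≥ (p/(1-αp))^p ∫_0^∞ f(x)^p dx`. -/
theorem stmt_8 (p α : ℝ) (hp0 : 0 < p) (hp1 : p < 1) (hα : α < 1 / p)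
    (f : ℝ → ℝ) (hf : Measurable f) (hf0 : ∀ x ∈ Set.Ioi (0 : ℝ), 0 ≤ f x) :
    ENNReal.ofReal ((p / (1 - α * p)) ^ p) * ∫⁻ x in Set.Ioi (0 : ℝ), ENNReal.ofReal (f x) ^ p ≤
      ∫⁻ x in Set.Ioi (0 : ℝ),
        (ENNReal.ofReal (x ^ (-α)) *
          ∫⁻ t in Set.Ioi x, ENNReal.ofReal (f t * t ^ (α - 1))) ^ p := by
  
  obtain ⟨β, hαβ⟩ : ∃ β, β = 1 / p - α := ⟨_, rfl⟩
  have hβ : 0 < β := by rw [hαβ]; linarith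
  have hβp : 1 - α * p = β * p := by rw [hαβ]; field_simp
  have hC : p / (1 - α * p) = β⁻¹ := by rw [hβp]; field_simp
  calc _ = ENNReal.ofReal (β ^ (1 - p)) * ∫⁻ x in Set.Ioi (0 : ℝ), (ENNReal.ofReal (x ^ (β - 1)) *
      ∫⁻ t in Set.Ioi x, ENNReal.ofReal (f t) ^ p * ENNReal.ofReal (t ^ (-β))) := by
        rw [aux_swap _ _ (by fun_prop) (by fun_prop)]
        have e : ∫⁻ t in Set.Ioi (0 : ℝ), (ENNReal.ofReal (f t) ^ p * ENNReal.ofReal (t ^ (-β))) *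
            ∫⁻ x in Set.Ioo 0 t, ENNReal.ofReal (x ^ (β - 1)) =
            ∫⁻ t in Set.Ioi (0 : ℝ), ENNReal.ofReal β⁻¹ * ENNReal.ofReal (f t) ^ p := by
          refine setLIntegral_congr_fun measurableSet_Ioi fun t ht => ?_
          have ht0 : 0 < t := ht
          rw [aux_Ioo β t hβ ht0, mul_assoc, ← ENNReal.ofReal_mul (by positivity), mul_comm]
          congr 2
          rw [Real.rpow_neg ht0.le]
          have : t ^ β ≠ 0 := by positivity
          field_simp
        rw [e, lintegral_const_mul _ (by fun_prop), ← mul_assoc,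
          ← ENNReal.ofReal_mul (by positivity), hC]
        congr 2
        rw [Real.rpow_sub hβ, Real.inv_rpow hβ.le, Real.rpow_one]
        field_simp
    _ ≤ _ := by
        rw [← lintegral_const_mul' _ _ ENNReal.ofReal_ne_top]
        refine setLIntegral_mono' measurableSet_Ioi fun x hx => ?_
        exact aux_point p α β hp0 hp1 hβ hαβ f hf x hx
end

section
/- Let 0 < p < 1 and 0 < α < 1/p. For a nonnegative real sequence (a_n)_{n≥1} set T_n = n^{−α}·∑_{k=n}^∞ ((k+1)^α − k^α)·a_k. Then (1 + 1/(1−αp))·T_1^p + ∑_{n=2}^∞ T_n^p ≥ (αp/(1−αp))^p · ∑_{n=1}^∞ a_n^p. -/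
open scoped ENNReal

namespace Aux9

lemma tangent (p x b : ℝ) (hp0 : 0 < p) (hp1 : p < 1) (hx : 0 ≤ x) (hb : 0 < b) :
    x ^ p ≤ p * x * b ^ (p - 1) + (1 - p) * b ^ p := by
  have h := Real.geom_mean_le_arith_mean2_weighted hp0.le (by linarith : (0:ℝ) ≤ 1 - p) hx hb.le
    (by ring)
  have hb1 : 0 < b ^ (p - 1) := Real.rpow_pos_of_pos hb _
  have h2 := mul_le_mul_of_nonneg_right h hb1.le
  have e1 : b ^ (1 - p) * b ^ (p - 1) = 1 := by
    rw [← Real.rpow_add hb]; simp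
  have e2 : b * b ^ (p - 1) = b ^ p := by
    rw [Real.rpow_sub_one hb.ne']; field_simp
  calc x ^ p = x ^ p * b ^ (1 - p) * b ^ (p - 1) := by rw [mul_assoc, e1, mul_one]
    _ ≤ _ := h2
    _ = _ := by rw [← e2]; ring

/-- the bound on the weight -/
lemma hbound (α s n : ℝ) (hα : 0 < α) (hn : 1 ≤ n) (hs : s = max (α - 1) 0) :
    α * (n + 1) ^ α ≤ (n + 1 + s) * ((n + 1) ^ α - n ^ α) := by
  have hn0 : 0 < n := by linarith
  rcases le_total α 1 with h | h
  · have hs0 : s = 0 := by rw [hs]; exact max_eq_right (by linarith)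
    have hB := rpow_one_add_le_one_add_mul_self (s := -(1 / (n + 1))) (p := α)
      (by rw [neg_le_neg_iff, div_le_one (by linarith)]; linarith) hα.le h
    have e : 1 + -(1 / (n + 1)) = n / (n + 1) := by field_simp; ring
    rw [e, Real.div_rpow hn0.le (by linarith)] at hB
    have hpos : 0 < (n + 1) ^ α := Real.rpow_pos_of_pos (by linarith) _
    rw [div_le_iff₀ hpos] at hB
    have := mul_le_mul_of_nonneg_left hB (by linarith : (0:ℝ) ≤ n + 1)
    have e2 : (n + 1) * ((1 + α * -(1 / (n + 1))) * (n + 1) ^ α) = (n + 1 - α) * (n + 1) ^ α := by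
      field_simp
      ring
    rw [e2] at this
    rw [hs0]; nlinarith
  · have hs0 : s = α - 1 := by rw [hs]; exact max_eq_left (by linarith)
    have hB := one_add_mul_self_le_rpow_one_add (s := 1 / n) (p := α)
      (by have : 0 < 1 / n := by positivity
          linarith) h
    have e : 1 + 1 / n = (n + 1) / n := by field_simp
    rw [e, Real.div_rpow (by linarith) hn0.le] at hB
    have hpos : 0 < n ^ α := Real.rpow_pos_of_pos hn0 _
    rw [le_div_iff₀ hpos] at hB
    have := mul_le_mul_of_nonneg_left hB hn0.le
    have e2 : n * ((1 + α * (1 / n)) * n ^ α) = (n + α) * n ^ α := by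
      field_simp
    rw [e2] at this
    rw [hs0]; nlinarith

/-- increments -/
lemma incr (r s n : ℝ) (hr0 : 0 < r) (hr1 : r < 1) (hn : 1 ≤ n) (hs : 0 ≤ s) :
    (n + 1 + s) * (n + 1) ^ (-r) ≤ (n + 1 + s - r) * n ^ (-r) := by
  have hn0 : 0 < n := by linarith
  have hB := rpow_one_add_le_one_add_mul_self (s := -(1 / (n + 1))) (p := r)
      (by rw [neg_le_neg_iff, div_le_one (by linarith)]; linarith) hr0.le hr1.le
  have e : 1 + -(1 / (n + 1)) = n / (n + 1) := by field_simp; ring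
  rw [e, Real.div_rpow hn0.le (by linarith)] at hB
  rw [Real.rpow_neg (by linarith), Real.rpow_neg hn0.le]
  have hpos : 0 < (n + 1) ^ r := Real.rpow_pos_of_pos (by linarith) _
  have hpos2 : 0 < n ^ r := Real.rpow_pos_of_pos hn0 _
  have h1 : (n + 1 + s) * (n ^ r / (n + 1) ^ r) ≤ n + 1 + s - r := by
    have := mul_le_mul_of_nonneg_left hB (by linarith : (0:ℝ) ≤ n + 1 + s)
    refine this.trans ?_
    have : (n + 1 + s) * (1 + r * -(1 / (n + 1))) = n + 1 + s - r - r * s / (n + 1) := by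
      field_simp; ring
    rw [this]
    have : 0 ≤ r * s / (n + 1) := by positivity
    linarith
  calc (n + 1 + s) * ((n + 1) ^ r)⁻¹
      = ((n + 1 + s) * (n ^ r / (n + 1) ^ r)) * (n ^ r)⁻¹ := by field_simp
    _ ≤ _ := mul_le_mul_of_nonneg_right h1 (by positivity)

lemma first (p α s : ℝ) (hp0 : 0 < p) (hp1 : p < 1) (hα : 0 < α) (hr1 : α * p < 1)
    (hs : s = max (α - 1) 0) :
    p / (1 - α * p) * ((2 + s) * (2:ℝ) ^ (-(α * p))) + (1 - p) * (2:ℝ) ^ (-(α * p))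
      ≤ 1 + 1 / (1 - α * p) := by
  have hr0 : 0 < α * p := by positivity
  have hB := rpow_one_add_le_one_add_mul_self (s := -(1 / 2 : ℝ)) (p := α * p)
      (by norm_num) hr0.le hr1.le
  have e : (1 + -(1 / 2 : ℝ)) ^ (α * p) = 2 ^ (-(α * p)) := by
    rw [Real.rpow_neg (by norm_num), ← Real.inv_rpow (by norm_num)]; norm_num
  rw [e] at hB
  set v := (2:ℝ) ^ (-(α * p))
  have hv : 0 < v := Real.rpow_pos_of_pos (by norm_num) _
  have hd : 0 < 1 - α * p := by linarith
  have key : p * (2 + s) + (1 - p) * (1 - α * p) ≤ 2 := by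
    rcases le_total α 1 with h | h
    · have hs0 : s = 0 := by rw [hs]; exact max_eq_right (by linarith)
      rw [hs0]; nlinarith
    · have hs0 : s = α - 1 := by rw [hs]; exact max_eq_left (by linarith)
      rw [hs0]; nlinarith
  have k2 : v * (p * (2 + s) + (1 - p) * (1 - α * p)) ≤ 2 - α * p := by nlinarith
  have : p / (1 - α * p) * ((2 + s) * v) + (1 - p) * v
      = (v * (p * (2 + s) + (1 - p) * (1 - α * p))) / (1 - α * p) := by
    rw [eq_div_iff hd.ne']
    have hq : p / (1 - α * p) * (1 - α * p) = p := div_mul_cancel₀ _ hd.ne'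
    linear_combination ((2 + s) * v) * hq
  rw [this]
  have : 1 + 1 / (1 - α * p) = (2 - α * p) / (1 - α * p) := by field_simp; ring
  rw [this]
  gcongr

lemma step (p α s n x S S' : ℝ) (hp0 : 0 < p) (hp1 : p < 1) (hα : 0 < α) (hr1 : α * p < 1)
    (hs : s = max (α - 1) 0) (hn : 1 ≤ n) (hx : 0 ≤ x) (hS' : 0 ≤ S')
    (hSS : S = ((n + 1) ^ α - n ^ α) * x + S') :
    (α * p / (1 - α * p)) ^ p * x ^ p ≤
      p / (1 - α * p) * ((n + 1 + s) * (n + 1) ^ (-(α * p))) * (S ^ p - S' ^ p)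
      + (1 - p) * (n + 1) ^ (-(α * p)) * S ^ p := by
  have hn0 : 0 < n := by linarith
  have hΔ : 0 < (n + 1) ^ α - n ^ α := by
    have := Real.rpow_lt_rpow hn0.le (by linarith : n < n + 1) hα
    linarith
  have hd : 0 < 1 - α * p := by linarith
  have hSge : S' ≤ S := by nlinarith
  rcases (hS'.trans hSge).eq_or_lt with h0 | hS
  · have hS'0 : S' = 0 := by linarith
    have hx0 : x = 0 := by
      have : ((n + 1) ^ α - n ^ α) * x = 0 := by linarith
      rcases mul_eq_zero.1 this with h | h
      · linarith
      · exact h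
    rw [hx0, hS'0, ← h0, Real.zero_rpow hp0.ne']; simp
  have hm : 0 < n + 1 := by linarith
  set Δ := (n + 1) ^ α - n ^ α with hΔdef
  have hL : 0 < α * p / (1 - α * p) := by positivity
  have hb : 0 < (n + 1) ^ (-α) * S := mul_pos (Real.rpow_pos_of_pos hm _) hS
  have t1 := tangent p (α * p / (1 - α * p) * x) ((n + 1) ^ (-α) * S) hp0 hp1 (by positivity) hb
  have t2 := tangent p S' S hp0 hp1 hS' hS
  have e2 : S ^ p = S * S ^ (p - 1) := by
    rw [Real.rpow_sub_one hS.ne']; field_simp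
  have t3 : p * (Δ * x) * S ^ (p - 1) ≤ S ^ p - S' ^ p := by
    have : Δ * x = S - S' := by linarith
    rw [this]
    have : p * (S - S') * S ^ (p - 1) = p * S ^ p - p * S' * S ^ (p - 1) := by rw [e2]; ring
    linarith
  have hD0 : 0 ≤ S ^ p - S' ^ p := by
    have := Real.rpow_le_rpow hS' hSge hp0.le
    linarith
  rw [Real.mul_rpow hL.le hx, Real.mul_rpow (Real.rpow_pos_of_pos hm _).le hS.le,
    Real.mul_rpow (Real.rpow_pos_of_pos hm _).le hS.le, ← Real.rpow_mul hm.le,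
    ← Real.rpow_mul hm.le] at t1
  have e3 : (n + 1) ^ (-α * (p - 1)) = (n + 1) ^ α * (n + 1) ^ (-(α * p)) := by
    rw [← Real.rpow_add hm]; congr 1; ring
  have e4 : -α * p = -(α * p) := by ring
  rw [e3, e4] at t1
  refine t1.trans ?_
  have hb2 := hbound α s n hα hn hs
  rw [← hΔdef] at hb2
  set A := (n + 1) ^ α
  set v := (n + 1) ^ (-(α * p))
  have hA : 0 < A := Real.rpow_pos_of_pos hm _
  have hv : 0 < v := Real.rpow_pos_of_pos hm _
  have hAΔ : α * A / Δ ≤ n + 1 + s := by rw [div_le_iff₀ hΔ]; exact hb2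
  have main : p * (α * p / (1 - α * p) * x) * (A * v * S ^ (p - 1)) ≤
      p / (1 - α * p) * ((n + 1 + s) * v) * (S ^ p - S' ^ p) := by
    calc p * (α * p / (1 - α * p) * x) * (A * v * S ^ (p - 1))
        = p / (1 - α * p) * ((α * A / Δ) * v) * (p * (Δ * x) * S ^ (p - 1)) := by
          field_simp
      _ ≤ p / (1 - α * p) * ((α * A / Δ) * v) * (S ^ p - S' ^ p) := by
          apply mul_le_mul_of_nonneg_left t3; positivity
      _ ≤ _ := by gcongr
  linarith

lemma telescoped (p α : ℝ) (hp0 : 0 < p) (hp1 : p < 1) (hα : 0 < α) (hr1 : α * p < 1)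
    (a S : ℕ → ℝ) (ha : ∀ n, 1 ≤ n → 0 ≤ a n) (hS0 : ∀ n, 0 ≤ S n)
    (hS : ∀ n : ℕ, 1 ≤ n → S n = (((n : ℝ) + 1) ^ α - (n : ℝ) ^ α) * a n + S (n + 1)) (N : ℕ) :
    (∑ k ∈ Finset.range (N + 1), (α * p / (1 - α * p)) ^ p * a (k + 1) ^ p)
      + p / (1 - α * p) * (((N:ℝ) + 2 + max (α - 1) 0) * ((N:ℝ) + 2) ^ (-(α * p))) * S (N + 2) ^ p
    ≤ (1 + 1 / (1 - α * p)) * S 1 ^ p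
      + ∑ k ∈ Finset.range N, ((k:ℝ) + 2) ^ (-(α * p)) * S (k + 2) ^ p := by
  have hs0 : 0 ≤ max (α - 1) 0 := le_max_right _ _
  have hd : 0 < 1 - α * p := by linarith
  induction N with
  | zero =>
    have h1 := step p α _ 1 (a 1) (S 1) (S 2) hp0 hp1 hα hr1 rfl le_rfl (ha 1 le_rfl) (hS0 2)
      (by simpa using hS 1 le_rfl)
    have h2 := first p α _ hp0 hp1 hα hr1 rfl
    have h3 := mul_le_mul_of_nonneg_right h2 (Real.rpow_nonneg (hS0 1) p)
    norm_num at h1 h3 ⊢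
    linarith
  | succ N ih =>
    rw [Finset.sum_range_succ _ (N + 1),
      Finset.sum_range_succ (fun k : ℕ => ((k:ℝ) + 2) ^ (-(α * p)) * S (k + 2) ^ p) N]
    have h1 := step p α _ ((N:ℝ) + 2) (a (N + 2)) (S (N + 2)) (S (N + 3)) hp0 hp1 hα hr1 rfl
      (by have : (0:ℝ) ≤ N := Nat.cast_nonneg N
          linarith) (ha _ (by omega)) (hS0 _)
      (by have := hS (N + 2) (by omega)
          push_cast at this
          exact this)
    have h2 := incr (α * p) (max (α - 1) 0) ((N:ℝ) + 2) (by positivity) hr1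
      (by have : (0:ℝ) ≤ N := Nat.cast_nonneg N
          linarith) hs0
    have h5 : ((N:ℝ) + 2 + 1) ^ (-(α * p)) ≤ ((N:ℝ) + 2) ^ (-(α * p)) :=
      Real.rpow_le_rpow_of_nonpos (by positivity) (by linarith) (by
        have : 0 < α * p := by positivity
        linarith)
    push_cast
    have e : (N:ℝ) + 1 + 2 = N + 2 + 1 := by ring
    rw [e]
    have hX := Real.rpow_nonneg (hS0 (N + 2)) p
    have e1 : N + 1 + 1 = N + 2 := rfl
    have e2 : N + 1 + 2 = N + 3 := rfl
    rw [e1, e2]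
    generalize S (N + 2) ^ p = X at *
    generalize S (N + 3) ^ p = Y at *
    generalize ((N:ℝ) + 2 + 1) ^ (-(α * p)) = v at *
    generalize ((N:ℝ) + 2) ^ (-(α * p)) = u at *
    generalize max (α - 1) 0 = s at *
    have h3 : p / (1 - α * p) * ((N + 2 + 1 + s) * v) ≤
        p / (1 - α * p) * ((N + 2 + s) * u) + p * u := by
      have := mul_le_mul_of_nonneg_left h2 (by positivity : 0 ≤ p / (1 - α * p))
      have hq : p / (1 - α * p) * (1 - α * p) = p := div_mul_cancel₀ _ hd.ne'
      generalize p / (1 - α * p) = q at *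
      refine this.trans (le_of_eq ?_)
      linear_combination u * hq
    have h4 : p / (1 - α * p) * ((N + 2 + 1 + s) * v) + (1 - p) * v ≤
        p / (1 - α * p) * ((N + 2 + s) * u) + u := by nlinarith
    have h6 := mul_le_mul_of_nonneg_right h4 hX
    linarith

end Aux9

/-- For `0 < p < 1`, `0 < α < 1/p` and `a_n ≥ 0`, with
`T_n = n^{-α} ∑_{k=n}^∞ ((k+1)^α - k^α) a_k`:
`(1 + 1/(1-αp)) T_1^p + ∑_{n≥2} T_n^p ≥ (αp/(1-αp))^p ∑_{n≥1} a_n^p`. -/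
theorem stmt_9 (p α : ℝ) (hp0 : 0 < p) (hp1 : p < 1) (hα0 : 0 < α) (hα : α < 1 / p)
    (a : ℕ → ℝ) (ha : ∀ n, 1 ≤ n → 0 ≤ a n)
    (T : ℕ → ℝ≥0∞)
    (hT : ∀ n, 1 ≤ n → T n = ENNReal.ofReal ((n : ℝ) ^ (-α)) *
      ∑' j : ℕ, ENNReal.ofReal ((((n + j : ℕ) : ℝ) + 1) ^ α - ((n + j : ℕ) : ℝ) ^ α) *
        ENNReal.ofReal (a (n + j))) :
    ENNReal.ofReal ((α * p / (1 - α * p)) ^ p) * ∑' n : ℕ, ENNReal.ofReal (a (n + 1)) ^ p ≤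
      ENNReal.ofReal (1 + 1 / (1 - α * p)) * T 1 ^ p + ∑' n : ℕ, T (n + 2) ^ p := by
  have hr1 : α * p < 1 := by rwa [lt_div_iff₀ hp0] at hα
  have hd : 0 < 1 - α * p := by linarith
  obtain ⟨U, hU⟩ : ∃ U : ℕ → ℝ≥0∞, ∀ n, U n = ∑' j : ℕ,
      ENNReal.ofReal ((((n + j : ℕ) : ℝ) + 1) ^ α - ((n + j : ℕ) : ℝ) ^ α) *
        ENNReal.ofReal (a (n + j)) := ⟨_, fun _ => rfl⟩
  have hUrec : ∀ n, U n = ENNReal.ofReal (((n : ℝ) + 1) ^ α - (n : ℝ) ^ α) *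
      ENNReal.ofReal (a n) + U (n + 1) := by
    intro n
    rw [hU n, hU (n + 1), tsum_eq_zero_add' ENNReal.summable]
    congr 1
    refine tsum_congr fun j => ?_
    have : n + (j + 1) = n + 1 + j := by ring
    rw [this]
  have hTU : ∀ n, 1 ≤ n → T n = ENNReal.ofReal ((n : ℝ) ^ (-α)) * U n := by
    intro n hn; rw [hT n hn, hU n]
  by_cases hfin : U 1 = ∞
  · have : T 1 = ∞ := by rw [hTU 1 le_rfl, hfin]; simp
    rw [this, ENNReal.top_rpow_of_pos hp0, ENNReal.mul_top]
    · simp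
    · have : 0 < 1 + 1 / (1 - α * p) := by positivity
      simpa using this
  have hUfin : ∀ n, U (n + 1) ≠ ∞ := by
    intro n
    induction n with
    | zero => exact hfin
    | succ n ih =>
      rw [hUrec (n + 1)] at ih
      exact (ENNReal.add_ne_top.1 ih).2
  have hTS : ∀ n, T (n + 1) ^ p =
      ENNReal.ofReal (((n:ℝ) + 1) ^ (-(α * p)) * (U (n + 1)).toReal ^ p) := by
    intro n
    rw [hTU (n + 1) (by omega)]
    nth_rewrite 1 [← ENNReal.ofReal_toReal (hUfin n)]
    have h0 : (0:ℝ) ≤ (n + 1 : ℕ) := Nat.cast_nonneg _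
    rw [← ENNReal.ofReal_mul (by positivity), ENNReal.ofReal_rpow_of_nonneg (by positivity) hp0.le,
      Real.mul_rpow (by positivity) (by positivity), ← Real.rpow_mul h0]
    push_cast
    congr 3
    ring
  have hSrec : ∀ n : ℕ, 1 ≤ n → (U n).toReal =
      (((n : ℝ) + 1) ^ α - (n : ℝ) ^ α) * a n + (U (n + 1)).toReal := by
    intro n hn
    rw [hUrec n, ENNReal.toReal_add (by finiteness) (hUfin n), ENNReal.toReal_mul,
      ENNReal.toReal_ofReal, ENNReal.toReal_ofReal (ha n hn)]
    have := Real.rpow_le_rpow (Nat.cast_nonneg n) (by linarith : (n:ℝ) ≤ n + 1) hα0.le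
    linarith
  have tel := Aux9.telescoped p α hp0 hp1 hα0 hr1 a (fun n => (U n).toReal) ha
    (fun n => ENNReal.toReal_nonneg) hSrec
  have hT1 : T 1 ^ p = ENNReal.ofReal ((U 1).toReal ^ p) := by
    have := hTS 0
    simpa using this
  have hLp : 0 ≤ (α * p / (1 - α * p)) ^ p := by positivity
  rw [← ENNReal.tsum_mul_left]
  refine ENNReal.tsum_le_of_sum_range_le fun N => ?_
  have hmono : ∑ k ∈ Finset.range N, ENNReal.ofReal ((α * p / (1 - α * p)) ^ p) *
      ENNReal.ofReal (a (k + 1)) ^ p ≤ ∑ k ∈ Finset.range (N + 1),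
      ENNReal.ofReal ((α * p / (1 - α * p)) ^ p) * ENNReal.ofReal (a (k + 1)) ^ p :=
    Finset.sum_le_sum_of_subset (Finset.range_mono (Nat.le_succ N))
  refine hmono.trans ?_
  have e1 : ∑ k ∈ Finset.range (N + 1),
      ENNReal.ofReal ((α * p / (1 - α * p)) ^ p) * ENNReal.ofReal (a (k + 1)) ^ p =
      ENNReal.ofReal (∑ k ∈ Finset.range (N + 1), (α * p / (1 - α * p)) ^ p * a (k + 1) ^ p) := by
    rw [ENNReal.ofReal_sum_of_nonneg]
    · refine Finset.sum_congr rfl fun k _ => ?_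
      rw [ENNReal.ofReal_mul hLp, ENNReal.ofReal_rpow_of_nonneg (ha _ (by omega)) hp0.le]
    · intro k _
      exact mul_nonneg hLp (Real.rpow_nonneg (ha _ (by omega)) _)
  rw [e1]
  have hb : ∑ k ∈ Finset.range N, T (k + 2) ^ p ≤ ∑' n : ℕ, T (n + 2) ^ p :=
    ENNReal.sum_le_tsum _
  refine le_trans ?_ (add_le_add le_rfl hb)
  have e2 : ∑ k ∈ Finset.range N, T (k + 2) ^ p = ENNReal.ofReal
      (∑ k ∈ Finset.range N, ((k:ℝ) + 2) ^ (-(α * p)) * (U (k + 2)).toReal ^ p) := by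
    rw [ENNReal.ofReal_sum_of_nonneg]
    · refine Finset.sum_congr rfl fun k _ => ?_
      rw [hTS (k + 1)]
      push_cast
      have : (k:ℝ) + 1 + 1 = k + 2 := by ring
      rw [this]
    · intro k _; positivity
  rw [e2, hT1, ← ENNReal.ofReal_mul (by positivity), ← ENNReal.ofReal_add (by positivity)
    (Finset.sum_nonneg fun k _ => by positivity)]
  apply ENNReal.ofReal_le_ofReal
  refine le_trans ?_ (tel N)
  have : 0 ≤ max (α - 1) 0 := le_max_right _ _
  apply le_add_of_nonneg_right
  positivity
end

section
/- Let (a_n)_{n≥1} be a nonnegative real sequence. If either (i) α ≥ 1 and 0 < p ≤ 2/((α+2)(α+1)), or (ii) 0 < α ≤ 1 and 0 < p ≤ 1/(α+2), then ∑_{n=1}^∞ ( ∑_{k=n}^∞ (α·k^{α−1}/n^α)·a_k )^p ≥ (αp/(1−αp))^p · ∑_{n=1}^∞ a_n^p. -/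
open scoped ENNReal

lemma aux_key (y r γ : ℝ) (hy : 1 ≤ y) (hr : 1 < r) (hr2 : r ≤ 2) (hγ : 0 < γ)
    (h1 : r * y = y + 1 - γ) (h2 : γ * (γ + 1) ≤ r * (r - 1) * y) (u : ℝ) (hu : 0 ≤ u) :
    (1 + y) * u + (1 + u) ^ (-γ) ≤ (1 + y * u) ^ r := by
  have pos1 : ∀ t : ℝ, 0 ≤ t → 0 < 1 + t := fun t ht => by linarith
  have pos2 : ∀ t : ℝ, 0 ≤ t → 0 < 1 + y * t := fun t ht => by positivity
  have dA : ∀ (s t : ℝ), 0 ≤ t →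
      HasDerivAt (fun t : ℝ => (1 + y * t) ^ s) (y * s * (1 + y * t) ^ (s - 1)) t := by
    intro s t ht
    have h : HasDerivAt (fun t : ℝ => 1 + y * t) y t := by
      simpa using ((hasDerivAt_id t).const_mul y).const_add 1
    exact h.rpow_const (Or.inl (pos2 t ht).ne')
  have dB : ∀ (s t : ℝ), 0 ≤ t →
      HasDerivAt (fun t : ℝ => (1 + t) ^ s) (s * (1 + t) ^ (s - 1)) t := by
    intro s t ht
    have h : HasDerivAt (fun t : ℝ => 1 + t) 1 t := by
      simpa using (hasDerivAt_id t).const_add 1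
    simpa using h.rpow_const (p := s) (Or.inl (pos1 t ht).ne')
  let K : ℝ → ℝ := fun t => (1 + y * t) ^ r - (1 + y) * t - (1 + t) ^ (-γ)
  let K1 : ℝ → ℝ := fun t =>
    y * r * (1 + y * t) ^ (r - 1) - (1 + y) - (-γ) * (1 + t) ^ (-γ - 1)
  have dK : ∀ t, 0 ≤ t → HasDerivAt K (K1 t) t := by
    intro t ht
    have h3 : HasDerivAt (fun t : ℝ => (1 + y) * t) (1 + y) t := by
      simpa using (hasDerivAt_id t).const_mul (1 + y)
    exact ((dA r t ht).sub h3).sub (dB (-γ) t ht)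
  have dK1 : ∀ t, 0 ≤ t → HasDerivAt K1 (y * r * (y * (r - 1) * (1 + y * t) ^ (r - 1 - 1))
      - (-γ) * ((-γ - 1) * (1 + t) ^ (-γ - 1 - 1))) t := by
    intro t ht
    exact (((dA (r - 1) t ht).const_mul (y * r)).sub_const (1 + y)).sub
      ((dB (-γ - 1) t ht).const_mul (-γ))
  have K2 : ∀ t, 0 ≤ t → 0 ≤ y * r * (y * (r - 1) * (1 + y * t) ^ (r - 1 - 1))
      - (-γ) * ((-γ - 1) * (1 + t) ^ (-γ - 1 - 1)) := by
    intro t ht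
    have e1 : (y * (1 + t)) ^ (r - 1 - 1) ≤ (1 + y * t) ^ (r - 1 - 1) :=
      Real.rpow_le_rpow_of_nonpos (pos2 t ht) (by nlinarith) (by linarith)
    rw [Real.mul_rpow (by linarith) (pos1 t ht).le] at e1
    have e2 : (1 + t) ^ (-γ - 1 - 1) ≤ (1 + t) ^ (r - 1 - 1) :=
      Real.rpow_le_rpow_of_exponent_le (by linarith) (by linarith)
    have e3 : y⁻¹ ≤ y ^ (r - 1 - 1) := by
      rw [← Real.rpow_neg_one]
      exact Real.rpow_le_rpow_of_exponent_le hy (by linarith)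
    have p1 := Real.rpow_pos_of_pos (pos1 t ht) (-γ - 1 - 1)
    have e4 : y⁻¹ * (1 + t) ^ (-γ - 1 - 1) ≤ (1 + y * t) ^ (r - 1 - 1) := by
      refine le_trans ?_ e1
      gcongr
    have e5 : y * r * (y * (r - 1) * (y⁻¹ * (1 + t) ^ (-γ - 1 - 1))) ≤
        y * r * (y * (r - 1) * (1 + y * t) ^ (r - 1 - 1)) := by
      have : 0 ≤ r - 1 := by linarith
      gcongr
    have e6 : y * r * (y * (r - 1) * (y⁻¹ * (1 + t) ^ (-γ - 1 - 1))) =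
        r * (r - 1) * y * (1 + t) ^ (-γ - 1 - 1) := by
      field_simp
    have e7 := mul_le_mul_of_nonneg_right h2 p1.le
    nlinarith
  have m1 : MonotoneOn K1 (Set.Ici 0) := by
    apply monotoneOn_of_deriv_nonneg (convex_Ici 0)
    · exact fun t ht => (dK1 t ht).continuousAt.continuousWithinAt
    · intro t ht
      rw [interior_Ici] at ht
      exact (dK1 t (le_of_lt ht)).differentiableAt.differentiableWithinAt
    · intro t ht
      rw [interior_Ici] at ht
      rw [(dK1 t (le_of_lt ht)).deriv]
      exact K2 t (le_of_lt ht)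
  have z1 : K1 0 = 0 := by
    simp only [K1, mul_zero, add_zero, Real.one_rpow]
    linarith
  have m0 : MonotoneOn K (Set.Ici 0) := by
    apply monotoneOn_of_deriv_nonneg (convex_Ici 0)
    · exact fun t ht => (dK t ht).continuousAt.continuousWithinAt
    · intro t ht
      rw [interior_Ici] at ht
      exact (dK t (le_of_lt ht)).differentiableAt.differentiableWithinAt
    · intro t ht
      rw [interior_Ici] at ht
      rw [(dK t (le_of_lt ht)).deriv, ← z1]
      exact m1 (by simp) (Set.mem_Ici.2 (le_of_lt ht)) (le_of_lt ht)
  have := m0 (by simp) hu hu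
  simp only [K, mul_zero, add_zero, Real.one_rpow] at this
  linarith

lemma aux_holder_s11 (p x τ D Q : ℝ) (hp : 0 < p) (hp1 : p < 1) (hx : 0 < x) (hτ : 0 < τ)
    (hD : 0 ≤ D) (hQ : 0 ≤ Q) :
    x ^ (1 - p) * D ^ p + τ ^ (1 - p) * Q ^ p ≤ (x + τ) ^ (1 - p) * (D + Q) ^ p := by
  have hDx : D / x ∈ Set.Ici (0 : ℝ) := Set.mem_Ici.2 (by positivity)
  have hQt : Q / τ ∈ Set.Ici (0 : ℝ) := Set.mem_Ici.2 (by positivity)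
  have ha1 : 0 ≤ x / (x + τ) := by positivity
  have hb1 : 0 ≤ τ / (x + τ) := by positivity
  have h := (Real.concaveOn_rpow hp.le hp1.le).2 hDx hQt ha1 hb1 (by field_simp)
  simp only [smul_eq_mul] at h
  have e : x / (x + τ) * (D / x) + τ / (x + τ) * (Q / τ) = (D + Q) / (x + τ) := by field_simp
  rw [e, Real.div_rpow hD hx.le, Real.div_rpow hQ hτ.le,
    Real.div_rpow (by positivity) (by positivity)] at h
  have s : ∀ z : ℝ, 0 < z → z ^ (1 - p) = z / z ^ p := fun z hz => by
    rw [Real.rpow_sub hz, Real.rpow_one]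
  rw [s x hx, s τ hτ, s (x + τ) (by positivity)]
  have hs : 0 < x + τ := by positivity
  have h' := mul_le_mul_of_nonneg_left h hs.le
  have l : (x + τ) * (x / (x + τ) * (D ^ p / x ^ p) + τ / (x + τ) * (Q ^ p / τ ^ p)) =
    x / x ^ p * D ^ p + τ / τ ^ p * Q ^ p := by
    have := Real.rpow_pos_of_pos hx p
    have := Real.rpow_pos_of_pos hτ p
    field_simp
  rw [l] at h'
  calc _ ≤ _ := h'
    _ = _ := by ring

/-- parameter facts -/
lemma aux_params (p α : ℝ)
    (hcase : (1 ≤ α ∧ 0 < p ∧ p ≤ 2 / ((α + 2) * (α + 1))) ∨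
      (0 < α ∧ α ≤ 1 ∧ 0 < p ∧ p ≤ 1 / (α + 2))) :
    0 < α ∧ 0 < p ∧ α + 2 ≤ 1 / p ∧
      α * (α + 1 / p - 1) ≤ 1 / p * (1 / p - α - 1) := by
  rcases hcase with ⟨h1, hp, h⟩ | ⟨h0, h1, hp, h⟩
  · have hq : (α + 2) * (α + 1) / 2 ≤ 1 / p := by
      rw [le_div_iff₀ hp]
      rw [le_div_iff₀ (by positivity)] at h
      linarith
    refine ⟨by linarith, hp, by nlinarith, ?_⟩
    generalize 1 / p = q at *
    obtain ⟨d, hd, rfl⟩ : ∃ d, 0 ≤ d ∧ q = (α + 2) * (α + 1) / 2 + d := ⟨_, sub_nonneg.2 hq, by ring⟩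
    obtain ⟨e, he, rfl⟩ : ∃ e, 0 ≤ e ∧ α = 1 + e := ⟨_, sub_nonneg.2 h1, by ring⟩
    rw [← sub_nonneg]
    ring_nf
    positivity
  · have hq : α + 2 ≤ 1 / p := by
      rw [le_div_iff₀ hp]
      rw [le_div_iff₀ (by positivity)] at h
      linarith
    refine ⟨h0, hp, hq, ?_⟩
    generalize 1 / p = q at *
    obtain ⟨d, hd, rfl⟩ : ∃ d, 0 ≤ d ∧ q = α + 2 + d := ⟨_, sub_nonneg.2 hq, by ring⟩
    nlinarith [mul_nonneg hd hd]

lemma aux_coef (p α : ℝ) (hα : 0 < α) (hp : 0 < p) (h2 : α + 2 ≤ 1 / p)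
    (h3 : α * (α + 1 / p - 1) ≤ 1 / p * (1 / p - α - 1)) (n : ℝ) (hn : 1 ≤ n) :
    n ^ p * ((1 / p - α) + n * (1 + n⁻¹) ^ (-(α * p / (1 - p)))) ^ (1 - p) ≤
      1 / p - α + n - 1 := by
  obtain ⟨q, hq⟩ : ∃ q, q = 1 / p := ⟨_, rfl⟩
  have hpq : p = 1 / q := by rw [hq]; simp
  rw [← hq] at h2 h3 ⊢
  clear hq
  have hq2 : 2 < q := by linarith
  subst hpq
  have hq1 : 0 < q - 1 := by linarith
  have hq0 : 0 < q := by linarith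
  have eγ : α * (1 / q) / (1 - 1 / q) = α / (q - 1) := by field_simp
  have key := aux_key (q - α - 1) (q / (q - 1)) (α / (q - 1)) (by linarith)
    (by rw [lt_div_iff₀ hq1]; linarith) (by rw [div_le_iff₀ hq1]; linarith) (by positivity)
    (by field_simp; ring)
    (by
      have e1 : α / (q - 1) * (α / (q - 1) + 1) = α * (α + q - 1) / (q - 1) ^ 2 := by
        field_simp; ring
      have e2 : q / (q - 1) * (q / (q - 1) - 1) * (q - α - 1) = q * (q - α - 1) / (q - 1) ^ 2 := by
        field_simp; ring
      rw [e1, e2]; exact div_le_div_of_nonneg_right h3 (by positivity)) n⁻¹ (by positivity)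
  rw [eγ]
  have hn0 : 0 < n := by linarith
  set B := (1 + n⁻¹) ^ (-(α / (q - 1))) with hB
  have hB0 : 0 < B := by positivity
  have hw : 0 < 1 + (q - α - 1) * n⁻¹ := by
    have : 0 < q - α - 1 := by linarith
    positivity
  have hx : 0 < q - α := by linarith
  have hb : 0 ≤ 1 - 1 / q := by
    rw [sub_nonneg, div_le_one hq0]; linarith
  have k2 : ((q - α) * n⁻¹ + B) ^ (1 - 1 / q) ≤ 1 + (q - α - 1) * n⁻¹ := by
    have e0 : 1 + (q - α - 1) = q - α := by ring
    rw [e0] at key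
    have := Real.rpow_le_rpow (z := 1 - 1 / q) (by positivity) key hb
    rw [← Real.rpow_mul hw.le] at this
    have e : q / (q - 1) * (1 - 1 / q) = 1 := by field_simp
    rwa [e, Real.rpow_one] at this
  have e1 : q - α + n * B = n * ((q - α) * n⁻¹ + B) := by field_simp
  rw [e1, Real.mul_rpow hn0.le (by positivity), ← mul_assoc, ← Real.rpow_add hn0]
  have e2 : 1 / q + (1 - 1 / q) = 1 := by ring
  rw [e2, Real.rpow_one]
  calc _ ≤ n * (1 + (q - α - 1) * n⁻¹) := by gcongr
    _ = _ := by field_simp; ring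

/-- pointwise inequality -/
lemma aux_point_s11 (p α : ℝ) (hα : 0 < α) (hp : 0 < p) (h2 : α + 2 ≤ 1 / p)
    (h3 : α * (α + 1 / p - 1) ≤ 1 / p * (1 / p - α - 1)) (n : ℝ) (hn : 1 ≤ n)
    (b Q : ℝ) (hb : 0 ≤ b) (hQ : 0 ≤ Q) :
    (1 / p - α) * ((α * p / (1 - α * p)) ^ p * b ^ p) ≤
      (1 / p - α + n - 1) * ((α * n ^ (α - 1) * b + Q) / n ^ α) ^ p -
        n * (Q / (n + 1) ^ α) ^ p := by
  have hc := aux_coef p α hα hp h2 h3 n hn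
  have hp1 : p < 1 := by
    by_contra h
    push Not at h
    have : 1 / p ≤ 1 := by rw [div_le_one hp]; exact h
    linarith
  have hn0 : 0 < n := by linarith
  obtain ⟨x, hx⟩ : ∃ x, x = 1 / p - α := ⟨_, rfl⟩
  have hx0 : 0 < x := by linarith
  have ex : α * p / (1 - α * p) = α / x := by
    have : 1 - α * p = p * x := by rw [hx]; field_simp
    rw [this]; field_simp
  rw [ex]
  rw [← hx] at hc ⊢
  set τ := n * (1 + n⁻¹) ^ (-(α * p / (1 - p))) with hτ
  have hτ0 : 0 < τ := by positivity
  set D := α * n ^ (α - 1) * b with hD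
  have hD0 : 0 ≤ D := by positivity
  have H := aux_holder_s11 p x τ D Q hp hp1 hx0 hτ0 hD0 hQ
  have H' := mul_le_mul_of_nonneg_left H (Real.rpow_nonneg hn0.le ((1 - α) * p))
  have E1 : n ^ ((1 - α) * p) * (x ^ (1 - p) * D ^ p) = x * ((α / x) ^ p * b ^ p) := by
    rw [hD, Real.mul_rpow (by positivity) hb, Real.mul_rpow hα.le (by positivity),
      ← Real.rpow_mul hn0.le, Real.div_rpow hα.le hx0.le, Real.rpow_sub hx0, Real.rpow_one]
    have : n ^ ((1 - α) * p) * n ^ ((α - 1) * p) = 1 := by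
      rw [← Real.rpow_add hn0, ← add_mul]; simp
    calc _ = (n ^ ((1 - α) * p) * n ^ ((α - 1) * p)) * (x / x ^ p * (α ^ p * b ^ p)) := by ring
      _ = _ := by rw [this]; ring
  have E2 : n ^ ((1 - α) * p) * (τ ^ (1 - p) * Q ^ p) = n * (Q / (n + 1) ^ α) ^ p := by
    have e0 : 1 + n⁻¹ = (n + 1) / n := by field_simp
    have e1 : τ ^ (1 - p) = n ^ (1 - p) * ((n + 1) ^ (-(α * p)) * n ^ (α * p)) := by
      rw [hτ, Real.mul_rpow hn0.le (by positivity), ← Real.rpow_mul (by positivity)]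
      have : -(α * p / (1 - p)) * (1 - p) = -(α * p) := by
        have : 1 - p ≠ 0 := by linarith
        field_simp
      rw [this, e0, Real.div_rpow (by positivity) hn0.le, Real.rpow_neg hn0.le, div_inv_eq_mul]
    rw [e1, Real.div_rpow hQ (by positivity), ← Real.rpow_mul (by positivity),
      Real.rpow_neg (by positivity)]
    have : n ^ ((1 - α) * p) * n ^ (1 - p) * n ^ (α * p) = n := by
      rw [← Real.rpow_add hn0, ← Real.rpow_add hn0]
      ring_nf; simp
    calc _ = (n ^ ((1 - α) * p) * n ^ (1 - p) * n ^ (α * p)) * (Q ^ p / (n + 1) ^ (α * p)) := by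
          ring
      _ = _ := by rw [this]
  have E3 : n ^ ((1 - α) * p) * ((x + τ) ^ (1 - p) * (D + Q) ^ p) ≤
      (x + n - 1) * ((D + Q) / n ^ α) ^ p := by
    rw [Real.div_rpow (by positivity) (by positivity), ← Real.rpow_mul hn0.le]
    have : n ^ ((1 - α) * p) = n ^ p / n ^ (α * p) := by
      rw [← Real.rpow_sub hn0]; ring_nf
    rw [this]
    calc _ = (n ^ p * (x + τ) ^ (1 - p)) * ((D + Q) ^ p / n ^ (α * p)) := by ring
      _ ≤ _ := by gcongr
  rw [mul_add, E1, E2] at H'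
  linarith

theorem stmt_11 (p α : ℝ)
    (hcase : (1 ≤ α ∧ 0 < p ∧ p ≤ 2 / ((α + 2) * (α + 1))) ∨
      (0 < α ∧ α ≤ 1 ∧ 0 < p ∧ p ≤ 1 / (α + 2)))
    (a : ℕ → ℝ) (ha : ∀ n, 1 ≤ n → 0 ≤ a n) :
    ENNReal.ofReal ((α * p / (1 - α * p)) ^ p) * ∑' n : ℕ, ENNReal.ofReal (a (n + 1)) ^ p ≤
      ∑' n : ℕ,
        (∑' k : ℕ, ENNReal.ofReal
          (α * ((n + 1 + k : ℕ) : ℝ) ^ (α - 1) / ((n : ℝ) + 1) ^ α * a (n + 1 + k))) ^ p := by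
  obtain ⟨hα, hp, h2, h3⟩ := aux_params p α hcase
  have hx0 : 0 < 1 / p - α := by linarith
  have hC : 0 ≤ (α * p / (1 - α * p)) ^ p := by
    have : 1 - α * p = p * (1 / p - α) := by field_simp
    rw [this]; positivity
  set C := (α * p / (1 - α * p)) ^ p with hCdef
  -- weighted terms
  let f : ℕ → ℝ := fun m => α * ((m + 1 : ℕ) : ℝ) ^ (α - 1) * a (m + 1)
  have hf : ∀ m, 0 ≤ f m := fun m => by
    have := ha (m + 1) (by omega)
    positivity
  have inner : ∀ n : ℕ, (∑' k : ℕ, ENNReal.ofReal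
          (α * ((n + 1 + k : ℕ) : ℝ) ^ (α - 1) / ((n : ℝ) + 1) ^ α * a (n + 1 + k))) =
      (∑' k : ℕ, ENNReal.ofReal (f (k + n))) * ENNReal.ofReal ((((n : ℝ) + 1) ^ α)⁻¹) := by
    intro n
    rw [← ENNReal.tsum_mul_right]
    congr 1
    ext k
    rw [← ENNReal.ofReal_mul (hf _)]
    congr 1
    have : n + 1 + k = k + n + 1 := by ring
    simp only [f, this]
    ring
  simp_rw [inner]
  by_cases hs : Summable f
  swap
  · -- infinite case
    have htop : ∀ n, (∑' k : ℕ, ENNReal.ofReal (f (k + n))) = ∞ := by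
      intro n
      by_contra hne
      apply hs
      rw [← summable_nat_add_iff n]
      have := ENNReal.summable_toReal hne
      refine this.congr fun k => ?_
      rw [ENNReal.toReal_ofReal (hf _)]
    have h0 : ((∑' k : ℕ, ENNReal.ofReal (f (k + 0))) *
        ENNReal.ofReal ((((0 : ℕ) : ℝ) + 1) ^ α)⁻¹) ^ p = ∞ := by
      rw [htop 0]
      simp [hp]
    refine le_trans le_top (h0 ▸ ENNReal.le_tsum 0)
  · let T : ℕ → ℝ := fun n => ∑' k, f (k + n)
    have hsn : ∀ n, Summable fun k => f (k + n) := fun n => (summable_nat_add_iff n).2 hs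
    have hT : ∀ n, 0 ≤ T n := fun n => tsum_nonneg fun k => hf _
    have hTs : ∀ n, T n = f n + T (n + 1) := by
      intro n
      simp only [T]
      rw [(hsn n).tsum_eq_zero_add]
      simp only [zero_add]
      congr 1
      apply tsum_congr
      intro k
      congr 1
      ring
    let A : ℕ → ℝ := fun n => T n / ((n : ℝ) + 1) ^ α
    have hA : ∀ n, 0 ≤ A n := fun n => div_nonneg (hT n) (by positivity)
    have term : ∀ n : ℕ, ((∑' k : ℕ, ENNReal.ofReal (f (k + n))) *
        ENNReal.ofReal ((((n : ℝ) + 1) ^ α)⁻¹)) ^ p = ENNReal.ofReal (A n ^ p) := by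
      intro n
      rw [← ENNReal.ofReal_tsum_of_nonneg (fun k => hf _) (hsn n), ← ENNReal.ofReal_mul (hT n),
        ENNReal.ofReal_rpow_of_nonneg (by have := hT n; positivity) hp.le]
      rfl
    simp_rw [term]
    have pt : ∀ n : ℕ, (1 / p - α) * (C * a (n + 1) ^ p) ≤
        (1 / p - α + n) * A n ^ p - (n + 1) * A (n + 1) ^ p := by
      intro n
      have := aux_point_s11 p α hα hp h2 h3 ((n : ℝ) + 1) (by simp) (a (n + 1)) (T (n + 1))
        (ha _ (by omega)) (hT _)
      have e : α * ((n : ℝ) + 1) ^ (α - 1) * a (n + 1) + T (n + 1) = T n := by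
        rw [hTs n]; simp [f]
      rw [e] at this
      have e2 : 1 / p - α + ((n : ℝ) + 1) - 1 = 1 / p - α + n := by ring
      rw [e2] at this
      simpa [A] using this
    have fin : ∀ N : ℕ, (1 / p - α) * ∑ n ∈ Finset.range N, C * a (n + 1) ^ p ≤
        (1 / p - α) * ∑ n ∈ Finset.range N, A n ^ p - N * A N ^ p := by
      intro N
      induction N with
      | zero => simp
      | succ N ih =>
        rw [Finset.sum_range_succ, Finset.sum_range_succ]
        have := pt N
        push_cast
        nlinarith
    have fin' : ∀ N : ℕ, ∑ n ∈ Finset.range N, C * a (n + 1) ^ p ≤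
        ∑ n ∈ Finset.range N, A n ^ p := by
      intro N
      have h := fin N
      have : 0 ≤ N * A N ^ p := mul_nonneg (by positivity) (Real.rpow_nonneg (hA N) _)
      exact le_of_mul_le_mul_left (by linarith) hx0
    rw [← ENNReal.tsum_mul_left]
    have lt : ∀ n : ℕ, ENNReal.ofReal C * ENNReal.ofReal (a (n + 1)) ^ p =
        ENNReal.ofReal (C * a (n + 1) ^ p) := by
      intro n
      rw [ENNReal.ofReal_mul hC, ENNReal.ofReal_rpow_of_nonneg (ha _ (by omega)) hp.le]
    simp_rw [lt]
    rw [ENNReal.tsum_eq_iSup_nat]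
    refine iSup_le fun N => ?_
    refine le_trans ?_ (ENNReal.sum_le_tsum (Finset.range N))
    rw [← ENNReal.ofReal_sum_of_nonneg
        (fun n _ => mul_nonneg hC (Real.rpow_nonneg (ha _ (by omega)) _)),
      ← ENNReal.ofReal_sum_of_nonneg (fun n _ => Real.rpow_nonneg (hA n) _)]
    exact ENNReal.ofReal_le_ofReal (fin' N)
end
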